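/- arXiv:1105.1798 — 4 statements merged into one kernel-verified Lean document; each statement's English description precedes it below -/
import Mathlib

section
/- Let λ : [0,1) → (0,∞) be continuous with ∫₀¹ r λ(r) dr < ∞, and let 1 < p < ∞. Let f : 𝔻 → ℂ be holomorphic with Taylor expansion f(z) = ∑_{n=0}^∞ f_n zⁿ and ∫_𝔻 |f(z)|^p λ(|z|) dA(z) < ∞. Let (t_n)_{n≥0} be a sequence of complex numbers of bounded variation, i.e. |t₀| + ∑_{n=1}^∞ |t_n − t_{n−1}| < ∞. Then the power series g(z) = ∑_{n=0}^∞ t_n f_n zⁿ converges for every z ∈ 𝔻, defines a holomorphic function on 𝔻, and satisfies ∫_𝔻 |g(z)|^p λ(|z|) dA(z) < ∞. -/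
/-!
The weight is radial, so in polar coordinates it suffices to bound `‖g(r ·)‖_p` by a constant,
independent of `r`, times `‖f(r ·)‖_p` on the circle of each radius `r < 1`. There, summation by
parts writes the partial sums of `g` as
`t_{N-1} S_N f - ∑_{i < N-1} (t_{i+1} - t_i) S_{i+1} f`, so the bounded variation of `t` reduces the
claim to the uniform boundedness of the partial sum operators `S_n` on `L^p` of the circle
(`exists_psum_bound`), that is, to M. Riesz's theorem.

M. Riesz's theorem is proved here for analytic polynomials in the form
`‖P‖_p ≤ K_p ‖Re P‖_p` when `P(0)` is real (`rieszBound`):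

* For `1 < p ≤ 2` and `Re P > 0` on the circle, `P ^ p` is holomorphic on the closed disc, so the
  mean of `Re (P ^ p)` is `P(0) ^ p ≥ 0`; integrating the elementary inequality
  `|w| ^ p ≤ A (Re w) ^ p - B Re (w ^ p)`, valid for `Re w > 0`, gives the bound (`riesz_pos`).
* For `1 < p ≤ 2` and general `P`, density of trigonometric polynomials gives `Q` with `Re Q` and
  `Re (Q - P)` positive and uniformly close to the positive and negative parts of `Re P`
  (`rieszBound_of_le_two`).
* The bound at `p` gives the bound at `2 p` by applying it to `-i (P² - P(0)²)`, whose real part is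
  `2 Re P Im P` (`rieszBound_two_mul`).

The boundedness of the Riesz projection, hence of `S_n`, follows by writing the real and the
imaginary part of `z⁻ⁿ f` as real parts of analytic polynomials (`exists_tail_bound`).
-/

open MeasureTheory Polynomial
open scoped ENNReal

namespace RadialMultiplier

noncomputable section

/-! ### Polynomials on the unit circle -/


/-- Normalised arc length on the unit circle, in the angular coordinate `θ ∈ (-π, π)`. -/
def arcMeasure : Measure ℝ :=
  (ENNReal.ofReal (2 * Real.pi))⁻¹ • volume.restrict (Set.Ioo (-Real.pi) Real.pi)

instance : IsProbabilityMeasure arcMeasure where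
  measure_univ := by
    have h : Real.pi - -Real.pi = 2 * Real.pi := by ring
    simp only [arcMeasure, Measure.smul_apply, Measure.restrict_apply_univ, Real.volume_Ioo, h,
      smul_eq_mul]
    exact ENNReal.inv_mul_cancel (by simp [Real.pi_pos]) ENNReal.ofReal_ne_top

/-- The point `exp (iθ)` of the unit circle. -/
def expI (θ : ℝ) : ℂ := circleMap 0 1 θ

lemma norm_expI (θ : ℝ) : ‖expI θ‖ = 1 := by simp [expI]

lemma continuous_expI : Continuous expI := continuous_circleMap 0 1

/-- Mean value property, over the arc measure. -/
lemma integral_arc_of_diffContOnCl {G : ℂ → ℂ} (hG : DiffContOnCl ℂ G (Metric.ball 0 1)) :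
    ∫ θ, G (expI θ) ∂arcMeasure = G 0 := by
  have h := DiffContOnCl.circleAverage (f := G) (c := 0) (R := 1) (by simpa using hG)
  rw [Real.circleAverage_def] at h
  have hper : Function.Periodic (fun θ => G (circleMap 0 1 θ)) (2 * Real.pi) := fun θ => by
    simp only [periodic_circleMap 0 1 θ]
  have h2 := hper.intervalIntegral_add_eq 0 (-Real.pi)
  have h3 : -Real.pi + 2 * Real.pi = Real.pi := by ring
  rw [zero_add, h3, intervalIntegral.integral_of_le (by linarith [Real.pi_pos]),
    intervalIntegral.integral_of_le (by linarith [Real.pi_pos])] at h2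
  rw [intervalIntegral.integral_of_le (by linarith [Real.pi_pos]), h2] at h
  rw [arcMeasure, integral_smul_measure, ← h, ENNReal.toReal_inv,
    ENNReal.toReal_ofReal (by linarith [Real.pi_pos]), integral_Ioc_eq_integral_Ioo]
  rfl

/-- The restriction of a polynomial to the unit circle. -/
def bd (P : ℂ[X]) (θ : ℝ) : ℂ := P.eval (expI θ)

lemma continuous_bd (P : ℂ[X]) : Continuous (bd P) := P.continuous.comp continuous_expI

lemma memLp_of_continuous_circle {E : Type*} [NormedAddCommGroup E] {h : ℂ → E}
    [SecondCountableTopology E] (hh : Continuous h) (p : ℝ≥0∞) :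
    MemLp (fun θ => h (expI θ)) p arcMeasure := by
  obtain ⟨C, hC⟩ := (isCompact_sphere (0:ℂ) 1).exists_bound_of_continuousOn hh.continuousOn
  exact MemLp.of_bound (hh.comp continuous_expI).aestronglyMeasurable C
    (ae_of_all _ fun θ => hC _ (by simp [norm_expI]))

lemma memLp_bd (P : ℂ[X]) (p : ℝ≥0∞) : MemLp (bd P) p arcMeasure :=
  memLp_of_continuous_circle P.continuous p

lemma memLp_re_bd (P : ℂ[X]) (p : ℝ≥0∞) : MemLp (fun θ => (bd P θ).re) p arcMeasure :=
  memLp_of_continuous_circle (h := fun z => (P.eval z).re)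
    (Complex.continuous_re.comp P.continuous) p

lemma diffContOnCl_poly (P : ℂ[X]) (s : Set ℂ) : DiffContOnCl ℂ (fun z => P.eval z) s :=
  P.differentiable.diffContOnCl

lemma integral_bd (P : ℂ[X]) : ∫ θ, bd P θ ∂arcMeasure = P.eval 0 :=
  integral_arc_of_diffContOnCl (diffContOnCl_poly P _)

lemma integral_re_bd (P : ℂ[X]) : ∫ θ, (bd P θ).re ∂arcMeasure = (P.eval 0).re := by
  rw [← integral_bd P]
  exact integral_re (𝕜 := ℂ) ((memLp_bd P 1).integrable le_rfl)

/-- The mean of a function is dominated by its `L^p` norm. -/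
lemma enorm_integral_le_eLpNorm {E : Type*} [NormedAddCommGroup E] [NormedSpace ℝ E] {h : ℝ → E}
    (hh : AEStronglyMeasurable h arcMeasure) {p : ℝ≥0∞} (hp : 1 ≤ p) :
    ‖∫ θ, h θ ∂arcMeasure‖ₑ ≤ eLpNorm h p arcMeasure := by
  refine (enorm_integral_le_lintegral_enorm _).trans ?_
  rw [← eLpNorm_one_eq_lintegral_enorm]
  exact eLpNorm_le_eLpNorm_of_exponent_le hp hh

/-! ### M. Riesz's inequality for polynomials with positive real part -/

/-- For `p ≤ 2` the number `cos (p θ)` is negative near `θ = ± π / 2`, so subtracting a multiple of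
`Re (w ^ p)` compensates the smallness of `Re w` there. -/
lemma pointwise_riesz {p : ℝ} (hp : 1 < p) (hp2 : p ≤ 2) :
    ∃ A B : ℝ, 0 ≤ A ∧ 0 ≤ B ∧ ∀ w : ℂ, 0 < w.re →
      ‖w‖ ^ p ≤ A * w.re ^ p - B * (w ^ (p : ℂ)).re := by
  have hpi := Real.pi_pos
  -- the midpoint of `(π / (2p), π / 2)`
  set φ : ℝ := (Real.pi / (2 * p) + Real.pi / 2) / 2 with hφ
  have hφp : p * φ = Real.pi / 4 + p * Real.pi / 4 := by rw [hφ]; field_simp; ring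
  have hφ1 : Real.pi / 2 < p * φ := by rw [hφp]; nlinarith
  have hφ2 : φ < Real.pi / 2 := by
    have : p * φ < p * (Real.pi / 2) := by rw [hφp]; nlinarith
    exact lt_of_mul_lt_mul_left this (by linarith)
  have hφ0 : 0 < φ := by positivity
  have hδ : Real.cos (p * φ) < 0 := Real.cos_neg_of_pi_div_two_lt_of_lt hφ1 (by nlinarith)
  have hcφ : 0 < Real.cos φ := Real.cos_pos_of_mem_Ioo ⟨by linarith, hφ2⟩
  set δ := -Real.cos (p * φ) with hδdef
  have hδ' : 0 < δ := by linarith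
  have hcp : 0 < Real.cos φ ^ p := Real.rpow_pos_of_pos hcφ p
  refine ⟨(1 + δ⁻¹) / Real.cos φ ^ p, δ⁻¹, by positivity, by positivity, fun w hw => ?_⟩
  rw [Complex.cpow_ofReal_re]
  have hw0 : w ≠ 0 := by rintro rfl; simp at hw
  have hnw : 0 < ‖w‖ := norm_pos_iff.2 hw0
  have hre : w.re = ‖w‖ * Real.cos (|Complex.arg w|) := by
    rw [Real.cos_abs, Complex.norm_mul_cos_arg]
  have harg : |Complex.arg w| < Real.pi / 2 := Complex.abs_arg_lt_pi_div_two_iff.2 (Or.inl hw)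
  have hcos2 : Real.cos (Complex.arg w * p) = Real.cos (p * |Complex.arg w|) := by
    rw [← Real.cos_abs, abs_mul, abs_of_pos (by linarith : 0 < p), mul_comm]
  have hcpos : 0 < Real.cos (|Complex.arg w|) :=
    Real.cos_pos_of_mem_Ioo ⟨by linarith [abs_nonneg (Complex.arg w)], harg⟩
  rw [hcos2, hre, Real.mul_rpow hnw.le hcpos.le]
  set a := |Complex.arg w|
  have ha : 0 ≤ a := abs_nonneg _
  have key : 1 ≤ (1 + δ⁻¹) / Real.cos φ ^ p * Real.cos a ^ p - δ⁻¹ * Real.cos (p * a) := by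
    rcases le_total a φ with h | h
    · have h1 : Real.cos φ ≤ Real.cos a :=
        Real.cos_le_cos_of_nonneg_of_le_pi ha (by linarith) h
      have h2 : Real.cos φ ^ p ≤ Real.cos a ^ p :=
        Real.rpow_le_rpow hcφ.le h1 (by linarith)
      have h3 : 1 + δ⁻¹ ≤ (1 + δ⁻¹) / Real.cos φ ^ p * Real.cos a ^ p := by
        rw [div_mul_eq_mul_div, le_div_iff₀ hcp]
        gcongr
      have h4 : δ⁻¹ * Real.cos (p * a) ≤ δ⁻¹ :=
        mul_le_of_le_one_right (by positivity) (Real.cos_le_one _)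
      linarith
    · have h1 : Real.cos (p * a) ≤ Real.cos (p * φ) :=
        Real.cos_le_cos_of_nonneg_of_le_pi (by positivity) (by nlinarith) (by gcongr)
      have h2 : δ⁻¹ * Real.cos (p * a) ≤ -1 := by
        calc δ⁻¹ * Real.cos (p * a) ≤ δ⁻¹ * (-δ) := by
              gcongr; linarith
          _ = -1 := by field_simp
      have h3 : 0 ≤ (1 + δ⁻¹) / Real.cos φ ^ p * Real.cos a ^ p := by positivity
      linarith
  have := mul_le_mul_of_nonneg_left key (Real.rpow_pos_of_pos hnw p).le
  linarith

/-- Minimum principle for the real part, by the maximum principle for `exp (-P)`. -/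
lemma re_pos_of_re_pos_circle (P : ℂ[X]) (hP : ∀ θ, 0 < (bd P θ).re) {z : ℂ}
    (hz : z ∈ Metric.closedBall (0:ℂ) 1) : 0 < (P.eval z).re := by
  obtain ⟨z₀, hz₀, hmin⟩ := (isCompact_sphere (0:ℂ) 1).exists_isMinOn
    (NormedSpace.sphere_nonempty.2 zero_le_one)
    (Complex.continuous_re.comp P.continuous).continuousOn
  have hpos : ∀ w ∈ Metric.sphere (0:ℂ) 1, 0 < (P.eval w).re := by
    intro w hw
    have h := hP (Complex.arg w)
    have : expI (Complex.arg w) = w := by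
      have h1 : ‖w‖ = 1 := by simpa using hw
      have := Complex.norm_mul_exp_arg_mul_I w
      simpa [expI, circleMap, h1] using this
    simpa [bd, this] using h
  have h := Complex.norm_le_of_forall_mem_frontier_norm_le (U := Metric.ball (0:ℂ) 1)
    (f := fun z => Complex.exp (-P.eval z)) (C := Real.exp (-(P.eval z₀).re))
    Metric.isBounded_ball (P.differentiable.neg.cexp.diffContOnCl) (z := z) ?_ ?_
  · rw [Complex.norm_exp, Real.exp_le_exp] at h
    have := hpos z₀ hz₀
    simp at h
    linarith
  · intro w hw
    rw [frontier_ball _ one_ne_zero] at hw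
    rw [Complex.norm_exp, Real.exp_le_exp]
    have := hmin hw
    simpa using this
  · rwa [closure_ball _ one_ne_zero]

/-- The bound for positive `Re P`: `∫ Re (P ^ p) = P(0) ^ p ≥ 0` by the mean value property, so the
subtracted term of `pointwise_riesz` can be dropped after integration. -/
lemma riesz_pos {p : ℝ} (hp : 1 < p) (hp2 : p ≤ 2) :
    ∃ K : ℝ≥0∞, K ≠ ∞ ∧ ∀ P : ℂ[X], (∀ θ, 0 < (bd P θ).re) → (P.eval 0).im = 0 →
      eLpNorm (bd P) (ENNReal.ofReal p) arcMeasure ≤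
        K * eLpNorm (fun θ => (bd P θ).re) (ENNReal.ofReal p) arcMeasure := by
  obtain ⟨A, B, hA, hB, hAB⟩ := pointwise_riesz hp hp2
  refine ⟨ENNReal.ofReal (A ^ p⁻¹), ENNReal.ofReal_ne_top, fun P hP h0 => ?_⟩
  have hp0 : ENNReal.ofReal p ≠ 0 := by simp; linarith
  rw [(memLp_bd P _).eLpNorm_eq_integral_rpow_norm hp0 ENNReal.ofReal_ne_top,
    (memLp_re_bd P _).eLpNorm_eq_integral_rpow_norm hp0 ENNReal.ofReal_ne_top,
    ENNReal.toReal_ofReal (by linarith), ← ENNReal.ofReal_mul (by positivity),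
    ← Real.mul_rpow hA (integral_nonneg fun θ => by positivity)]
  apply ENNReal.ofReal_le_ofReal
  refine Real.rpow_le_rpow (integral_nonneg fun θ => by positivity) ?_ (by positivity)
  have hpos : ∀ z ∈ Metric.closedBall (0:ℂ) 1, 0 < (P.eval z).re :=
    fun z hz => re_pos_of_re_pos_circle P hP hz
  have hG : DiffContOnCl ℂ (fun z => P.eval z ^ (p : ℂ)) (Metric.ball 0 1) := by
    apply DifferentiableOn.diffContOnCl
    rw [closure_ball _ one_ne_zero]
    intro z hz
    exact (P.differentiable z).differentiableWithinAt.cpow_const (Or.inl (hpos z hz))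
  have hmean := integral_arc_of_diffContOnCl hG
  have hGint : Integrable (fun θ => bd P θ ^ (p : ℂ)) arcMeasure := by
    have hcont : Continuous fun θ => bd P θ ^ (p : ℂ) :=
      (continuous_bd P).cpow continuous_const fun θ => Or.inl (hP θ)
    obtain ⟨C, hC⟩ := (isCompact_Icc (a := -Real.pi) (b := Real.pi)).exists_bound_of_continuousOn
      hcont.continuousOn
    refine Integrable.of_bound hcont.aestronglyMeasurable C ?_
    refine Measure.ae_smul_measure ?_ _
    filter_upwards [ae_restrict_mem measurableSet_Ioo] with θ hθ
    exact hC θ (Set.Ioo_subset_Icc_self hθ)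
  have hGre : Integrable (fun θ => (bd P θ ^ (p : ℂ)).re) arcMeasure := hGint.re
  have hre : 0 ≤ ∫ θ, (bd P θ ^ (p : ℂ)).re ∂arcMeasure := by
    have h1 : ∫ θ, (bd P θ ^ (p : ℂ)).re ∂arcMeasure
        = (∫ θ, bd P θ ^ (p : ℂ) ∂arcMeasure).re := integral_re (𝕜 := ℂ) hGint
    rw [h1]
    change 0 ≤ (∫ θ, P.eval (expI θ) ^ (p : ℂ) ∂arcMeasure).re
    rw [hmean]
    have h2 : P.eval 0 = ((P.eval 0).re : ℂ) := Complex.ext (by simp) (by simp [h0])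
    have h3 := hpos 0 (by simp)
    rw [h2, ← Complex.ofReal_cpow h3.le, Complex.ofReal_re]
    positivity
  have hu : Integrable (fun θ => ‖(bd P θ).re‖ ^ p) arcMeasure := by
    simpa [ENNReal.toReal_ofReal (by linarith : 0 ≤ p)] using
      (memLp_re_bd P (ENNReal.ofReal p)).integrable_norm_rpow hp0 ENNReal.ofReal_ne_top
  have hF : Integrable (fun θ => ‖bd P θ‖ ^ p) arcMeasure := by
    simpa [ENNReal.toReal_ofReal (by linarith : 0 ≤ p)] using
      (memLp_bd P (ENNReal.ofReal p)).integrable_norm_rpow hp0 ENNReal.ofReal_ne_top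
  calc ∫ θ, ‖bd P θ‖ ^ p ∂arcMeasure
      ≤ ∫ θ, (A * ‖(bd P θ).re‖ ^ p - B * (bd P θ ^ (p : ℂ)).re) ∂arcMeasure := by
        refine integral_mono hF ((hu.const_mul A).sub (hGre.const_mul B)) fun θ => ?_
        simp only [Real.norm_of_nonneg (hP θ).le]
        exact hAB _ (hP θ)
    _ = A * ∫ θ, ‖(bd P θ).re‖ ^ p ∂arcMeasure
        - B * ∫ θ, (bd P θ ^ (p : ℂ)).re ∂arcMeasure := by
        rw [integral_sub (hu.const_mul A) (hGre.const_mul B), integral_const_mul,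
          integral_const_mul]
    _ ≤ A * ∫ θ, ‖(bd P θ).re‖ ^ p ∂arcMeasure := by
        have := mul_nonneg hB hre
        linarith

/-! ### M. Riesz's inequality for `1 < p ≤ 2` -/

lemma fourier_coe_eq_expI_pow (n : ℕ) (θ : ℝ) :
    fourier (n : ℤ) (θ : AddCircle (2 * Real.pi)) = expI θ ^ n := by
  rw [fourier_coe_apply, expI, circleMap]
  simp only [Complex.ofReal_one, one_mul, zero_add, ← Complex.exp_nat_mul]
  congr 1
  have : (Real.pi : ℂ) ≠ 0 := by exact_mod_cast Real.pi_ne_zero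
  push_cast
  field_simp

/-- On the circle, the real part of a trigonometric polynomial is the real part of an analytic
polynomial. The factor `c` makes the claim stable under complex linear combinations. -/
lemma exists_poly_re_eq_of_mem_span {h : C(AddCircle (2 * Real.pi), ℂ)}
    (hh : h ∈ Submodule.span ℂ (Set.range (@fourier (2 * Real.pi)))) :
    ∀ c : ℂ, ∃ Q : ℂ[X], ∀ θ : ℝ, (c * h (θ : AddCircle (2 * Real.pi))).re = (bd Q θ).re := by
  induction hh using Submodule.span_induction with
  | mem x hx =>
    obtain ⟨n, rfl⟩ := hx
    intro c
    obtain ⟨m, rfl | rfl⟩ := n.eq_nat_or_neg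
    · refine ⟨C c * X ^ m, fun θ => ?_⟩
      rw [fourier_coe_eq_expI_pow]
      simp [bd]
    · refine ⟨C (starRingEnd ℂ c) * X ^ m, fun θ => ?_⟩
      rw [fourier_neg, fourier_coe_eq_expI_pow]
      simp only [bd, eval_mul, eval_C, eval_pow, eval_X, Complex.mul_re, Complex.conj_re,
        Complex.conj_im]
      ring
  | zero => exact fun c => ⟨0, fun θ => by simp [bd]⟩
  | add x y _ _ hx hy =>
    intro c
    obtain ⟨Q, hQ⟩ := hx c
    obtain ⟨R, hR⟩ := hy c
    refine ⟨Q + R, fun θ => ?_⟩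
    have h1 := hQ θ
    have h2 := hR θ
    simp only [bd, eval_add, Complex.add_re, ContinuousMap.add_apply, mul_add] at *
    rw [h1, h2]
  | smul a x _ hx =>
    intro c
    obtain ⟨Q, hQ⟩ := hx (c * a)
    refine ⟨Q, fun θ => ?_⟩
    rw [← hQ θ]
    simp [mul_assoc]

/-- Real parts of analytic polynomials, normalised to be real at `0`, are uniformly dense in the
real continuous functions on the circle. -/
lemma exists_poly_re_near {ψ : ℂ → ℝ} (hψ : Continuous ψ) {ε : ℝ} (hε : 0 < ε) :
    ∃ Q : ℂ[X], (Q.eval 0).im = 0 ∧ ∀ θ, |(bd Q θ).re - ψ (expI θ)| < ε := by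
  have : Fact (0 < 2 * Real.pi) := ⟨by positivity⟩
  let Φ : C(AddCircle (2 * Real.pi), ℂ) :=
    ⟨fun x => (ψ (fourier 1 x) : ℂ), by fun_prop⟩
  have hΦ : Φ ∈ (Submodule.span ℂ (Set.range (@fourier (2 * Real.pi)))).topologicalClosure := by
    rw [span_fourier_closure_eq_top]; trivial
  obtain ⟨h, hh, hd⟩ := Metric.mem_closure_iff.1 hΦ ε hε
  obtain ⟨Q, hQ⟩ := exists_poly_re_eq_of_mem_span hh 1
  refine ⟨Q - C (((Q.eval 0).im : ℂ) * Complex.I), by simp, fun θ => ?_⟩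
  have h1 : (bd (Q - C (((Q.eval 0).im : ℂ) * Complex.I)) θ).re = (bd Q θ).re := by
    simp [bd]
  have h2 : Φ (θ : AddCircle (2 * Real.pi)) = (ψ (expI θ) : ℂ) := by
    have := fourier_coe_eq_expI_pow 1 θ
    rw [Nat.cast_one, pow_one] at this
    simp only [Φ, ContinuousMap.coe_mk, this]
  have h3 := (ContinuousMap.dist_apply_le_dist (f := Φ) (g := h) (θ : AddCircle (2 * Real.pi)))
  rw [h1, ← hQ θ, one_mul]
  rw [dist_comm, dist_eq_norm, h2] at h3
  refine lt_of_le_of_lt ?_ (lt_of_le_of_lt h3 hd)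
  have := Complex.abs_re_le_norm (h (θ : AddCircle (2 * Real.pi)) - (ψ (expI θ) : ℂ))
  simpa using this

/-- M. Riesz's inequality in `L^p` for analytic polynomials: the real part controls the whole
polynomial, provided the value at the origin is real. -/
def RieszBound (p : ℝ) : Prop :=
  ∃ K : ℝ≥0∞, K ≠ ∞ ∧ ∀ P : ℂ[X], (P.eval 0).im = 0 →
    eLpNorm (bd P) (ENNReal.ofReal p) arcMeasure ≤
      K * eLpNorm (fun θ => (bd P θ).re) (ENNReal.ofReal p) arcMeasure

lemma rieszBound_of_le_two {p : ℝ} (hp : 1 < p) (hp2 : p ≤ 2) : RieszBound p := by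
  obtain ⟨K, hK, hKP⟩ := riesz_pos hp hp2
  refine ⟨2 * K, ENNReal.mul_ne_top (by simp) hK, fun P h0 => ?_⟩
  have hp1 : 1 ≤ ENNReal.ofReal p := by simpa using hp.le
  set q := ENNReal.ofReal p
  have hq0 : q ≠ 0 := by simp [q]; linarith
  set N := eLpNorm (fun θ => (bd P θ).re) q arcMeasure with hN
  -- It suffices to lose an arbitrarily small additive term.
  have main : ∀ ε : ℝ, 0 < ε → eLpNorm (bd P) q arcMeasure ≤ 2 * K * (N + ENNReal.ofReal ε) := by
    intro ε hε
    -- `Re Q` approximates `u⁺ + ε / 2` to within `ε / 2`, with `u = Re P`; so `Re Q` and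
    -- `Re (Q - P)`, an approximation of `u⁻ + ε / 2`, are both positive.
    obtain ⟨Q, hQ0, hQ⟩ := exists_poly_re_near (ψ := fun z => max (P.eval z).re 0 + ε / 2)
      (((Complex.continuous_re.comp P.continuous).max continuous_const).add continuous_const)
      (half_pos hε)
    have hsub : ∀ θ, bd (Q - P) θ = bd Q θ - bd P θ := fun θ => by simp [bd]
    have hb : ∀ θ, |(bd Q θ).re - (max (bd P θ).re 0 + ε / 2)| < ε / 2 := hQ
    have hQpos : ∀ θ, 0 < (bd Q θ).re := fun θ => by
      have := abs_lt.1 (hb θ)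
      linarith [le_max_right (bd P θ).re 0]
    have hRpos : ∀ θ, 0 < (bd (Q - P) θ).re := fun θ => by
      have := abs_lt.1 (hb θ)
      rw [hsub, Complex.sub_re]
      linarith [le_max_left (bd P θ).re 0]
    have hbound : ∀ R : ℂ[X], (∀ θ, ‖(bd R θ).re‖ ≤ |(bd P θ).re| + ε) →
        eLpNorm (fun θ => (bd R θ).re) q arcMeasure ≤ N + ENNReal.ofReal ε := by
      intro R hR
      calc eLpNorm (fun θ => (bd R θ).re) q arcMeasure
          ≤ eLpNorm ((fun θ => ‖(bd P θ).re‖) + fun _ => ε) q arcMeasure :=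
            eLpNorm_mono_real hR
        _ ≤ eLpNorm (fun θ => ‖(bd P θ).re‖) q arcMeasure
            + eLpNorm (fun _ : ℝ => ε) q arcMeasure :=
            eLpNorm_add_le (memLp_re_bd P q).1.norm aestronglyMeasurable_const hp1
        _ = N + ENNReal.ofReal ε := by
            rw [eLpNorm_norm, eLpNorm_const _ hq0 (NeZero.ne _)]
            simp [Real.enorm_eq_ofReal hε.le, hN]
    have e1 := (hKP Q hQpos hQ0).trans (mul_le_mul_right (hbound Q fun θ => by
      have := abs_lt.1 (hb θ)
      rw [Real.norm_of_nonneg (hQpos θ).le]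
      have h1 : max (bd P θ).re 0 ≤ |(bd P θ).re| := max_le (le_abs_self _) (abs_nonneg _)
      linarith) K)
    have e2 := (hKP (Q - P) hRpos (by simp [hQ0, h0])).trans
      (mul_le_mul_right (hbound (Q - P) fun θ => by
      have := abs_lt.1 (hb θ)
      rw [Real.norm_of_nonneg (hRpos θ).le, hsub, Complex.sub_re]
      have h1 : max (bd P θ).re 0 ≤ |(bd P θ).re| + (bd P θ).re :=
        max_le (by linarith [abs_nonneg (bd P θ).re]) (by linarith [neg_abs_le (bd P θ).re])
      linarith) K)
    have h3 : bd P = bd Q - bd (Q - P) := by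
      funext θ; simp [hsub]
    calc eLpNorm (bd P) q arcMeasure
        ≤ eLpNorm (bd Q) q arcMeasure + eLpNorm (bd (Q - P)) q arcMeasure := by
          rw [h3]; exact eLpNorm_sub_le (memLp_bd _ q).1 (memLp_bd _ q).1 hp1
      _ ≤ K * (N + ENNReal.ofReal ε) + K * (N + ENNReal.ofReal ε) := add_le_add e1 e2
      _ = 2 * K * (N + ENNReal.ofReal ε) := by ring
  have hlim : Filter.Tendsto (fun ε : ℝ => 2 * K * (N + ENNReal.ofReal ε))
      (nhdsWithin 0 (Set.Ioi 0)) (nhds (2 * K * (N + ENNReal.ofReal 0))) := by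
    refine Filter.Tendsto.mono_left ?_ nhdsWithin_le_nhds
    refine ENNReal.Tendsto.const_mul ?_ (Or.inr (ENNReal.mul_ne_top (by simp) hK))
    exact (ENNReal.continuous_ofReal.tendsto 0).const_add N
  rw [ENNReal.ofReal_zero, add_zero] at hlim
  exact ge_of_tendsto hlim (by filter_upwards [self_mem_nhdsWithin] with ε hε using main ε hε)

/-! ### M. Riesz's inequality for all `p > 1` -/

/-- Doubling the exponent (Cotlar's trick): apply the bound at `p` to `-i (P² - P(0)²)`, whose real
part is `2 Re P Im P`. -/
lemma rieszBound_two_mul {p : ℝ} (hp : 1 < p) (h : RieszBound p) : RieszBound (2 * p) := by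
  obtain ⟨K, hK, hKP⟩ := h
  refine ⟨2 * K + 1, by finiteness, fun P h0 => ?_⟩
  have hp1 : 1 ≤ ENNReal.ofReal p := by simpa using hp.le
  have hp2 : 1 ≤ ENNReal.ofReal (2 * p) := by
    rw [ENNReal.one_le_ofReal]; linarith
  set x := eLpNorm (bd P) (ENNReal.ofReal (2 * p)) arcMeasure with hx
  set a := eLpNorm (fun θ => (bd P θ).re) (ENNReal.ofReal (2 * p)) arcMeasure with ha
  have hxt : x ≠ ∞ := (memLp_bd P _).2.ne
  have hat : a ≠ ∞ := (memLp_re_bd P _).2.ne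
  have hexp : ENNReal.ofReal p * ENNReal.ofReal 2 = ENNReal.ofReal (2 * p) := by
    rw [← ENNReal.ofReal_mul (by linarith), mul_comm]
  have hsq : eLpNorm (fun θ => bd P θ ^ 2) (ENNReal.ofReal p) arcMeasure = x ^ 2 := by
    have h1 := eLpNorm_norm_rpow (μ := arcMeasure) (p := ENNReal.ofReal p) (bd P) (q := 2) two_pos
    rw [hexp, ← hx] at h1
    rw [← eLpNorm_norm]
    simpa using h1
  set m : ℂ := P.eval 0
  have hm : m = (m.re : ℂ) := Complex.ext (by simp) (by simp [h0, m])
  have hma : ‖m‖ₑ ≤ a := by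
    rw [hm, ← integral_re_bd P]
    refine le_trans (le_of_eq ?_) (enorm_integral_le_eLpNorm (memLp_re_bd P 1).1 hp2)
    simp [← ofReal_norm]
  set R : ℂ[X] := C (-Complex.I) * (P ^ 2 - C (m ^ 2)) with hR
  have hbR : ∀ θ, bd R θ = -Complex.I * (bd P θ ^ 2 - m ^ 2) := fun θ => by simp [bd, hR]
  have hR0 : (R.eval 0).im = 0 := by simp [hR, m]
  have hreR : ∀ θ, (bd R θ).re = (2 * (bd P θ).re) * (bd P θ).im := fun θ => by
    rw [hbR, hm]
    simp [pow_two]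
    ring
  have hprod : eLpNorm (fun θ => (bd R θ).re) (ENNReal.ofReal p) arcMeasure ≤ 2 * a * x := by
    have htr : ENNReal.HolderTriple (ENNReal.ofReal (2 * p)) (ENNReal.ofReal (2 * p))
        (ENNReal.ofReal p) := by
      constructor
      rw [← hexp, ← ENNReal.ofReal_inv_of_pos (by linarith), mul_comm]
      rw [← ENNReal.ofReal_mul (by norm_num), ← ENNReal.ofReal_inv_of_pos (by linarith),
        ← ENNReal.ofReal_add (by positivity) (by positivity)]
      congr 1
      field_simp; norm_num
    have him : eLpNorm (fun θ => (bd P θ).im) (ENNReal.ofReal (2 * p)) arcMeasure ≤ x :=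
      eLpNorm_mono fun θ => Complex.abs_im_le_norm _
    have h2re : eLpNorm (fun θ => 2 * (bd P θ).re) (ENNReal.ofReal (2 * p)) arcMeasure = 2 * a := by
      have := eLpNorm_const_smul (μ := arcMeasure) (p := ENNReal.ofReal (2 * p)) (2 : ℝ)
        (fun θ => (bd P θ).re)
      refine Eq.trans ?_ (this.trans ?_)
      · rfl
      · rw [Real.enorm_eq_ofReal (by norm_num)]; simp [ha]
    have hmeas : AEStronglyMeasurable (fun θ => (bd P θ).im) arcMeasure :=
      (Complex.continuous_im.comp (continuous_bd P)).aestronglyMeasurable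
    have hmeas2 : AEStronglyMeasurable (fun θ => 2 * (bd P θ).re) arcMeasure :=
      (memLp_re_bd P 1).1.const_mul 2
    have := eLpNorm_smul_le_mul_eLpNorm (p := ENNReal.ofReal (2 * p)) (q := ENNReal.ofReal (2 * p))
      (r := ENNReal.ofReal p) hmeas hmeas2
    rw [h2re] at this
    refine le_trans (le_of_eq ?_) (this.trans (by gcongr))
    congr 1
    funext θ
    rw [hreR]
    rfl
  have hxR : x ^ 2 ≤ 2 * K * a * x + a ^ 2 := by
    have e : (fun θ => bd P θ ^ 2) = (Complex.I • bd R) + fun _ => m ^ 2 := by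
      funext θ
      simp only [Pi.add_apply, Pi.smul_apply, hbR, smul_eq_mul]
      linear_combination ((bd P θ ^ 2 - m ^ 2)) * Complex.I_sq
    rw [← hsq, e]
    refine (eLpNorm_add_le ((memLp_bd R 1).1.const_smul _) aestronglyMeasurable_const hp1).trans ?_
    refine add_le_add ?_ ?_
    · rw [eLpNorm_const_smul]
      have : ‖Complex.I‖ₑ = 1 := by simp [← ofReal_norm]
      rw [this, one_mul]
      refine ((hKP R hR0).trans (mul_le_mul_right hprod K)).trans (le_of_eq (by ring))
    · rw [eLpNorm_const _ (by simp; linarith) (NeZero.ne _)]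
      simp only [measure_univ, ENNReal.one_rpow, mul_one, enorm_pow]
      gcongr
  -- `x² ≤ 2 K a x + a²` forces `x ≤ (2 K + 1) a`.
  by_contra! hlt
  have hax : a ≤ x := by
    refine le_trans ?_ hlt.le
    nth_rw 1 [← one_mul a]
    gcongr
    simp
  have h1 : (2 * K + 1) * a * x < x * x := by
    have hx0 : x ≠ 0 := fun h => by simp [h] at hlt
    exact ENNReal.mul_lt_mul_left hx0 hxt hlt
  have h2 : x ^ 2 ≤ (2 * K + 1) * a * x := by
    refine hxR.trans ?_
    rw [add_mul, add_mul, one_mul, pow_two]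
    gcongr
  exact absurd (h2.trans_lt h1) (by rw [pow_two]; exact lt_irrefl _)

lemma rieszBound {p : ℝ} (hp : 1 < p) : RieszBound p := by
  have key : ∀ k : ℕ, ∀ p : ℝ, 1 < p → p ≤ 2 ^ (k + 1) → RieszBound p := by
    intro k
    induction k with
    | zero => exact fun p hp h => rieszBound_of_le_two hp (by simpa using h)
    | succ k ih =>
      intro p hp h
      rcases le_or_gt p 2 with h2 | h2
      · exact rieszBound_of_le_two hp h2
      · have := rieszBound_two_mul (p := p / 2) (by linarith)
          (ih (p / 2) (by linarith) (by rw [pow_succ] at h; linarith))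
        simpa [mul_div_cancel₀] using this
  obtain ⟨k, hk⟩ := pow_unbounded_of_one_lt p (one_lt_two)
  exact key k p hp (hk.le.trans (pow_le_pow_right₀ one_le_two (Nat.le_succ k)))

/-! ### Partial sums and multipliers of bounded variation -/

/-- The partial sum `∑_{k < n} a_k X^k`. -/
def psum (a : ℕ → ℂ) (n : ℕ) : ℂ[X] := ∑ k ∈ Finset.range n, C (a k) * X ^ k

lemma bd_psum (a : ℕ → ℂ) (n : ℕ) (θ : ℝ) :
    bd (psum a n) θ = ∑ k ∈ Finset.range n, a k * expI θ ^ k := by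
  simp [bd, psum, eval_finsetSum]

lemma expI_mul_conj (θ : ℝ) : expI θ * starRingEnd ℂ (expI θ) = 1 := by
  rw [Complex.mul_conj, Complex.normSq_eq_norm_sq, norm_expI]; simp

/-- The Riesz projection is bounded: for `h = z⁻ⁿ (∑_{k<n} a_k z^k + z^n R)`, both `Re h` and `Im h`
are real parts of analytic polynomials `F`, `G`, and `F + i G = 2 R` up to a constant. -/
lemma exists_tail_bound {p : ℝ} (hp : 1 < p) :
    ∃ L : ℝ≥0∞, L ≠ ∞ ∧ ∀ (a : ℕ → ℂ) (n : ℕ) (R : ℂ[X]),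
      eLpNorm (bd R) (ENNReal.ofReal p) arcMeasure ≤
        L * eLpNorm (bd (psum a n + X ^ n * R)) (ENNReal.ofReal p) arcMeasure := by
  obtain ⟨K, hK, hKP⟩ := rieszBound hp
  have hp1 : 1 ≤ ENNReal.ofReal p := by simpa using hp.le
  set q := ENNReal.ofReal p
  refine ⟨2 * K + 1, by finiteness, fun a n R => ?_⟩
  set f := psum a n + X ^ n * R with hf
  set N := eLpNorm (bd f) q arcMeasure
  -- `conj S` equals `z⁻ⁿ ∑_{k<n} a_k z^k` on the circle.
  set S : ℂ[X] := ∑ k ∈ Finset.range n, C (starRingEnd ℂ (a k)) * X ^ (n - k) with hS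
  set h : ℝ → ℂ := fun θ => starRingEnd ℂ (expI θ) ^ n * bd f θ with hh
  have hpow : ∀ θ (k : ℕ), starRingEnd ℂ (expI θ) ^ k * expI θ ^ k = 1 := fun θ k => by
    rw [← mul_pow, mul_comm, expI_mul_conj, one_pow]
  have hdecomp : ∀ θ, h θ = starRingEnd ℂ (bd S θ) + bd R θ := by
    intro θ
    have h1 : starRingEnd ℂ (expI θ) ^ n * bd (psum a n) θ = starRingEnd ℂ (bd S θ) := by
      rw [bd_psum]
      simp only [hS, bd, eval_finsetSum, eval_mul, eval_C, eval_pow, eval_X, map_sum, map_mul,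
        map_pow, Complex.conj_conj, Finset.mul_sum]
      refine Finset.sum_congr rfl fun k hk => ?_
      have hkn : n = (n - k) + k := (Nat.sub_add_cancel (Finset.mem_range.1 hk).le).symm
      conv_lhs => rw [hkn, pow_add]
      linear_combination a k * starRingEnd ℂ (expI θ) ^ (n - k) * hpow θ k
    have h2 : bd f θ = bd (psum a n) θ + expI θ ^ n * bd R θ := by simp [bd, hf]
    simp only [hh]
    rw [h2, mul_add, h1, ← mul_assoc, hpow, one_mul]
  have hnorm : ∀ θ, ‖h θ‖ = ‖bd f θ‖ := fun θ => by simp [hh, norm_expI]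
  have hNh : eLpNorm h q arcMeasure = N := eLpNorm_congr_norm_ae (ae_of_all _ hnorm)
  have hS0 : S.eval 0 = 0 := by
    simp only [hS, eval_finsetSum, eval_mul, eval_C, eval_pow, eval_X]
    refine Finset.sum_eq_zero fun k hk => ?_
    rw [zero_pow (Nat.sub_pos_of_lt (Finset.mem_range.1 hk)).ne', mul_zero]
  have hhm : AEStronglyMeasurable h arcMeasure := by
    refine Continuous.aestronglyMeasurable ?_
    exact ((Complex.continuous_conj.comp continuous_expI).pow n).mul (continuous_bd f)
  set m : ℂ := R.eval 0 with hm
  have hmN : ‖m‖ₑ ≤ N := by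
    have hmean : ∫ θ, h θ ∂arcMeasure = m := by
      simp only [hdecomp]
      rw [integral_add, integral_conj, integral_bd, integral_bd, hS0, map_zero, zero_add]
      · exact (Complex.conjCLE.toContinuousLinearMap).integrable_comp
          ((memLp_bd S 1).integrable le_rfl)
      · exact (memLp_bd R 1).integrable le_rfl
    rw [← hmean, ← hNh]
    exact enorm_integral_le_eLpNorm hhm hp1
  set F : ℂ[X] := R + S - C ((m.im : ℂ) * Complex.I) with hF
  set G : ℂ[X] := C (-Complex.I) * R + C Complex.I * S + C ((m.re : ℂ) * Complex.I) with hG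
  have hFN : eLpNorm (bd F) q arcMeasure ≤ K * N := by
    refine (hKP F (by simp [hF, hS0, ← hm])).trans (mul_le_mul_right ?_ K)
    rw [← hNh]
    refine eLpNorm_mono fun θ => ?_
    have : (bd F θ).re = (h θ).re := by
      rw [hdecomp]; simp [bd, hF]; ring
    rw [this]; exact Complex.abs_re_le_norm _
  have hGN : eLpNorm (bd G) q arcMeasure ≤ K * N := by
    refine (hKP G (by simp [hG, hS0, ← hm])).trans (mul_le_mul_right ?_ K)
    rw [← hNh]
    refine eLpNorm_mono fun θ => ?_
    have : (bd G θ).re = (h θ).im := by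
      rw [hdecomp]; simp [bd, hG]; ring
    rw [this]; exact Complex.abs_im_le_norm _
  have hsum : bd R + bd R = (bd F + Complex.I • bd G) + fun _ => m := by
    funext θ
    simp only [Pi.add_apply, Pi.smul_apply, smul_eq_mul, bd, hF, hG, eval_add, eval_sub, eval_mul,
      eval_C]
    have e := Complex.re_add_im m
    linear_combination (R.eval (expI θ) - S.eval (expI θ) - m.re) * Complex.I_sq + e
  have hRR : eLpNorm (bd R) q arcMeasure ≤ eLpNorm (bd R + bd R) q arcMeasure := by
    refine eLpNorm_mono fun θ => ?_
    rw [Pi.add_apply, ← two_mul, norm_mul]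
    simp only [Complex.norm_ofNat]
    linarith [norm_nonneg (bd R θ)]
  calc eLpNorm (bd R) q arcMeasure
      ≤ eLpNorm ((bd F + Complex.I • bd G) + fun _ => m) q arcMeasure := by rwa [← hsum]
    _ ≤ eLpNorm (bd F + Complex.I • bd G) q arcMeasure
        + eLpNorm (fun _ : ℝ => m) q arcMeasure :=
        eLpNorm_add_le ((memLp_bd F q).1.add ((memLp_bd G q).1.const_smul _))
          aestronglyMeasurable_const hp1
    _ ≤ (eLpNorm (bd F) q arcMeasure + eLpNorm (Complex.I • bd G) q arcMeasure)
        + eLpNorm (fun _ : ℝ => m) q arcMeasure := by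
        gcongr
        exact eLpNorm_add_le (memLp_bd F q).1 ((memLp_bd G q).1.const_smul _) hp1
    _ ≤ (K * N + K * N) + N := by
        have h1 : ‖Complex.I‖ₑ = 1 := by simp [← ofReal_norm]
        rw [eLpNorm_const_smul, h1, one_mul,
          eLpNorm_const _ (by simp [q]; linarith) (NeZero.ne _)]
        simp only [measure_univ, ENNReal.one_rpow, mul_one]
        gcongr
    _ = (2 * K + 1) * N := by ring

lemma exists_psum_bound {p : ℝ} (hp : 1 < p) :
    ∃ L : ℝ≥0∞, L ≠ ∞ ∧ ∀ (a : ℕ → ℂ) (n N : ℕ), n ≤ N →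
      eLpNorm (bd (psum a n)) (ENNReal.ofReal p) arcMeasure ≤
        L * eLpNorm (bd (psum a N)) (ENNReal.ofReal p) arcMeasure := by
  obtain ⟨L, hL, hLP⟩ := exists_tail_bound hp
  have hp1 : 1 ≤ ENNReal.ofReal p := by simpa using hp.le
  refine ⟨1 + L, by finiteness, fun a n N hnN => ?_⟩
  set R := psum (fun k => a (n + k)) (N - n) with hR
  have hsplit : psum a N = psum a n + X ^ n * R := by
    have : N = n + (N - n) := (Nat.add_sub_of_le hnN).symm
    conv_lhs => rw [this]
    simp only [psum, hR, Finset.sum_range_add, Finset.mul_sum, pow_add]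
    congr 1
    refine Finset.sum_congr rfl fun k _ => by ring
  have h1 := hLP a n R
  rw [← hsplit] at h1
  have h2 : bd (psum a n) = bd (psum a N) - bd (X ^ n * R) := by
    funext θ; rw [hsplit]; simp [bd]
  have h3 : eLpNorm (bd (X ^ n * R)) (ENNReal.ofReal p) arcMeasure
      = eLpNorm (bd R) (ENNReal.ofReal p) arcMeasure :=
    eLpNorm_congr_norm_ae (ae_of_all _ fun θ => by simp [bd, norm_expI])
  rw [h2, add_mul, one_mul]
  refine (eLpNorm_sub_le (memLp_bd _ 1).1 (memLp_bd _ 1).1 hp1).trans ?_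
  rw [h3]
  gcongr

/-- Summation by parts, with a bound uniform in the number `N` of terms. -/
lemma exists_multiplier_bound {p : ℝ} (hp : 1 < p) {t : ℕ → ℂ}
    (ht : Summable fun n => ‖t (n + 1) - t n‖) {M : ℝ} (hM : ∀ n, ‖t n‖ ≤ M) :
    ∃ L : ℝ≥0∞, L ≠ ∞ ∧ ∀ (a : ℕ → ℂ) (N : ℕ),
      eLpNorm (bd (psum (fun k => t k * a k) N)) (ENNReal.ofReal p) arcMeasure ≤
        L * eLpNorm (bd (psum a N)) (ENNReal.ofReal p) arcMeasure := by
  obtain ⟨L, hL, hLP⟩ := exists_psum_bound hp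
  have hp1 : 1 ≤ ENNReal.ofReal p := by simpa using hp.le
  set q := ENNReal.ofReal p
  set V := ∑' n, ‖t (n + 1) - t n‖ with hV
  refine ⟨ENNReal.ofReal M * L + ENNReal.ofReal V * L, by finiteness, fun a N => ?_⟩
  set A := eLpNorm (bd (psum a N)) q arcMeasure
  have hparts : bd (psum (fun k => t k * a k) N) = t (N - 1) • bd (psum a N)
      - ∑ i ∈ Finset.range (N - 1), (t (i + 1) - t i) • bd (psum a (i + 1)) := by
    funext θ
    have h := Finset.sum_range_by_parts t (fun k => a k * expI θ ^ k) N
    simp only [Pi.sub_apply, Pi.smul_apply, Finset.sum_apply, bd_psum]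
    rw [← h]
    simp [mul_assoc]
  rw [hparts]
  refine (eLpNorm_sub_le ((memLp_bd _ q).1.const_smul _)
    (Finset.aestronglyMeasurable_sum _ fun i _ => (memLp_bd _ q).1.const_smul _) hp1).trans ?_
  rw [add_mul, eLpNorm_const_smul]
  refine add_le_add ?_ ?_
  · rw [mul_assoc]
    refine mul_le_mul' ?_ (hLP a N N le_rfl)
    rw [← ofReal_norm]
    exact ENNReal.ofReal_le_ofReal (hM _)
  · refine (eLpNorm_sum_le (fun i _ => (memLp_bd _ q).1.const_smul _) hp1).trans ?_
    calc ∑ i ∈ Finset.range (N - 1), eLpNorm ((t (i + 1) - t i) • bd (psum a (i + 1))) q arcMeasure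
        ≤ ∑ i ∈ Finset.range (N - 1), ENNReal.ofReal ‖t (i + 1) - t i‖ * (L * A) := by
          refine Finset.sum_le_sum fun i hi => ?_
          rw [eLpNorm_const_smul, ofReal_norm]
          gcongr
          exact hLP a (i + 1) N (by have := Finset.mem_range.1 hi; omega)
      _ ≤ ENNReal.ofReal V * L * A := by
          rw [← Finset.sum_mul, mul_assoc, ← ENNReal.ofReal_sum_of_nonneg fun i _ => norm_nonneg _]
          gcongr
          exact ht.sum_le_tsum _ fun i _ => norm_nonneg _

/-- Passage from polynomials to absolutely convergent power series on a circle. -/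
lemma eLpNorm_multiplier_le {q L : ℝ≥0∞} (hq : 1 ≤ q) (hL : L ≠ ∞) {t : ℕ → ℂ}
    (hLP : ∀ (a : ℕ → ℂ) (N : ℕ), eLpNorm (bd (psum (fun k => t k * a k) N)) q arcMeasure ≤
        L * eLpNorm (bd (psum a N)) q arcMeasure)
    {a : ℕ → ℂ} (ha : Summable fun k => ‖a k‖) {F G : ℝ → ℂ}
    (hF : ∀ θ, HasSum (fun k => a k * expI θ ^ k) (F θ))
    (hG : ∀ θ, HasSum (fun k => t k * a k * expI θ ^ k) (G θ)) :
    eLpNorm G q arcMeasure ≤ L * eLpNorm F q arcMeasure := by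
  have hFt : ∀ θ, Filter.Tendsto (fun N => bd (psum a N) θ) Filter.atTop (nhds (F θ)) :=
    fun θ => by simpa only [bd_psum] using (hF θ).tendsto_sum_nat
  have hGt : ∀ θ, Filter.Tendsto (fun N => bd (psum (fun k => t k * a k) N) θ) Filter.atTop
      (nhds (G θ)) := fun θ => by simpa only [bd_psum] using (hG θ).tendsto_sum_nat
  have hFm : AEStronglyMeasurable F arcMeasure :=
    aestronglyMeasurable_of_tendsto_ae Filter.atTop (fun N => (memLp_bd (psum a N) 1).1)
      (ae_of_all _ hFt)
  set τ : ℕ → ℝ := fun N => ∑' k, ‖a (k + N)‖ with hτ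
  have hτ0 : Filter.Tendsto τ Filter.atTop (nhds 0) := tendsto_sum_nat_add fun k => ‖a k‖
  have hdiff : ∀ N θ, ‖bd (psum a N) θ - F θ‖ ≤ τ N := by
    intro N θ
    have h1 : HasSum (fun k => a (k + N) * expI θ ^ (k + N)) (F θ - bd (psum a N) θ) := by
      rw [bd_psum]; exact (hasSum_nat_add_iff' N).2 (hF θ)
    rw [norm_sub_rev, ← h1.tsum_eq]
    have hs : Summable fun k => ‖a (k + N)‖ := (summable_nat_add_iff N).2 ha
    refine tsum_of_norm_bounded hs.hasSum fun k => ?_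
    simp [norm_expI]
  have hN : ∀ N, eLpNorm (bd (psum a N)) q arcMeasure
      ≤ eLpNorm F q arcMeasure + ENNReal.ofReal (τ N) := by
    intro N
    have e : bd (psum a N) = F + (bd (psum a N) - F) := by abel
    have hm : AEStronglyMeasurable (bd (psum a N) - F) arcMeasure := (memLp_bd _ 1).1.sub hFm
    rw [e]
    refine (eLpNorm_add_le hFm hm hq).trans ?_
    gcongr
    refine (eLpNorm_le_of_ae_bound (ae_of_all _ fun θ => hdiff N θ)).trans ?_
    simp
  have hlim : Filter.Tendsto (fun N => L * (eLpNorm F q arcMeasure + ENNReal.ofReal (τ N)))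
      Filter.atTop (nhds (L * (eLpNorm F q arcMeasure + ENNReal.ofReal 0))) :=
    ENNReal.Tendsto.const_mul
      (((ENNReal.continuous_ofReal.tendsto 0).comp hτ0).const_add _) (Or.inr hL)
  rw [ENNReal.ofReal_zero, add_zero] at hlim
  refine (Lp.eLpNorm_lim_le_liminf_eLpNorm (fun N => (memLp_bd _ 1).1) G (ae_of_all _ hGt)).trans ?_
  rw [← hlim.liminf_eq]
  refine Filter.liminf_le_liminf (Filter.Eventually.of_forall fun N => ?_)
  exact (hLP a N).trans (mul_le_mul_right (hN N) L)

/-! ### Polar coordinates -/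

lemma lintegral_ball_polar (Φ : ℂ → ℝ≥0∞) :
    ∫⁻ z in Metric.ball (0:ℂ) 1, Φ z =
      ∫⁻ x : ℝ × ℝ, ENNReal.ofReal x.1 * Φ (x.1 * expI x.2)
        ∂((volume.restrict (Set.Ioo 0 1)).prod
          (volume.restrict (Set.Ioo (-Real.pi) Real.pi))) := by
  rw [Measure.prod_restrict, ← lintegral_indicator Metric.isOpen_ball.measurableSet,
    ← Complex.lintegral_comp_polarCoord_symm, ← Measure.volume_eq_prod]
  have hT : MeasurableSet polarCoord.target := polarCoord.open_target.measurableSet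
  have hS : MeasurableSet (Set.Ioo (0:ℝ) 1 ×ˢ Set.Ioo (-Real.pi) Real.pi) :=
    measurableSet_Ioo.prod measurableSet_Ioo
  rw [← lintegral_indicator hT, ← lintegral_indicator hS]
  congr 1
  funext x
  have hsymm : Complex.polarCoord.symm x = x.1 * expI x.2 := by
    rw [Complex.polarCoord_symm_apply]
    simp [expI, circleMap, Complex.exp_mul_I]
  have hmem : x.1 * expI x.2 ∈ Metric.ball (0:ℂ) 1 ↔ |x.1| < 1 := by
    simp [norm_expI]
  by_cases hx : x ∈ Set.Ioo (0:ℝ) 1 ×ˢ Set.Ioo (-Real.pi) Real.pi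
  · have hxT : x ∈ polarCoord.target := ⟨hx.1.1, hx.2⟩
    rw [Set.indicator_of_mem hx, Set.indicator_of_mem hxT, hsymm, Set.indicator_of_mem]
    · rfl
    · rw [hmem, abs_lt]; exact ⟨by linarith [hx.1.1], hx.1.2⟩
  · rw [Set.indicator_of_notMem hx]
    by_cases hxT : x ∈ polarCoord.target
    · rw [Set.indicator_of_mem hxT, hsymm, Set.indicator_of_notMem]
      · simp
      · rw [hmem]
        intro h
        exact hx ⟨⟨hxT.1, (abs_lt.1 h).2⟩, hxT.2⟩
    · rw [Set.indicator_of_notMem hxT]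

lemma lintegral_rpow_le_of_eLpNorm_le {p : ℝ} (hp : 1 < p) {L : ℝ≥0∞} {F G : ℝ → ℂ}
    (h : eLpNorm G (ENNReal.ofReal p) arcMeasure ≤ L * eLpNorm F (ENNReal.ofReal p) arcMeasure) :
    ∫⁻ θ in Set.Ioo (-Real.pi) Real.pi, ‖G θ‖ₑ ^ p ≤
      L ^ p * ∫⁻ θ in Set.Ioo (-Real.pi) Real.pi, ‖F θ‖ₑ ^ p := by
  have hp0 : ENNReal.ofReal p ≠ 0 := by simp; linarith
  have hpp : 0 < p := by linarith
  rw [eLpNorm_eq_lintegral_rpow_enorm_toReal hp0 ENNReal.ofReal_ne_top,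
    eLpNorm_eq_lintegral_rpow_enorm_toReal hp0 ENNReal.ofReal_ne_top,
    ENNReal.toReal_ofReal hpp.le] at h
  have h2 := ENNReal.rpow_le_rpow h hpp.le
  rw [ENNReal.mul_rpow_of_nonneg _ _ hpp.le, ← ENNReal.rpow_mul, ← ENNReal.rpow_mul,
    one_div_mul_cancel hpp.ne', ENNReal.rpow_one, ENNReal.rpow_one, arcMeasure,
    lintegral_smul_measure, lintegral_smul_measure, smul_eq_mul, smul_eq_mul,
    mul_left_comm] at h2
  refine (ENNReal.mul_le_mul_iff_right ?_ ?_).1 h2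
  · exact ENNReal.inv_ne_zero.2 ENNReal.ofReal_ne_top
  · simp [Real.pi_pos]

end

end RadialMultiplier

open RadialMultiplier


/-- For an integrable radial weight `λ`, `1 < p < ∞`, a holomorphic
`f(z) = ∑ f_n zⁿ` in the weighted `L^p` space, and a sequence `(t_n)` of bounded variation,
the series `g(z) = ∑ t_n f_n zⁿ` converges at every point of the disc, defines a holomorphic
function, and lies in the weighted `L^p` space. -/
theorem stmt2 (lam : ℝ → ℝ) (hcont : ContinuousOn lam (Set.Ico 0 1))
    (hpos : ∀ r ∈ Set.Ico (0:ℝ) 1, 0 < lam r)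
    (hint : MeasureTheory.IntegrableOn (fun r : ℝ => r * lam r) (Set.Ioo (0:ℝ) 1))
    (p : ℝ) (hp : 1 < p)
    (f : ℂ → ℂ) (hf : DifferentiableOn ℂ f (Metric.ball 0 1))
    (c : ℕ → ℂ)
    (hc : ∀ z ∈ Metric.ball (0:ℂ) 1, HasSum (fun n : ℕ => c n * z ^ n) (f z))
    (hfLp : (∫⁻ z in Metric.ball (0:ℂ) 1,
        ENNReal.ofReal (‖f z‖ ^ p * lam ‖z‖)) < ⊤)
    (t : ℕ → ℂ) (ht : Summable (fun n : ℕ => ‖t (n + 1) - t n‖)) :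
    ∃ g : ℂ → ℂ, DifferentiableOn ℂ g (Metric.ball 0 1) ∧
      (∀ z ∈ Metric.ball (0:ℂ) 1, HasSum (fun n : ℕ => t n * c n * z ^ n) (g z)) ∧
      (∫⁻ z in Metric.ball (0:ℂ) 1, ENNReal.ofReal (‖g z‖ ^ p * lam ‖z‖)) < ⊤ := by
  obtain ⟨M, hM⟩ : ∃ M, ∀ n, ‖t n‖ ≤ M := by
    have hcauchy : CauchySeq t := cauchySeq_of_summable_dist (by
      simpa only [dist_eq_norm, norm_sub_rev] using ht)
    obtain ⟨M, hM⟩ := hcauchy.isBounded_range.exists_norm_le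
    exact ⟨M, fun n => hM _ ⟨n, rfl⟩⟩
  have hsum : ∀ r : ℝ, 0 ≤ r → r < 1 → Summable fun n => ‖c n * (r : ℂ) ^ n‖ := fun r h0 h1 =>
    (hc r (by simpa [abs_of_nonneg h0] using h1)).summable.norm
  have hbd : ∀ (r : ℝ), ∀ z : ℂ, ‖z‖ ≤ r → ∀ n,
      ‖t n * c n * z ^ n‖ ≤ M * ‖c n * (r : ℂ) ^ n‖ := by
    intro r z hz n
    have hr : 0 ≤ r := (norm_nonneg z).trans hz
    rw [mul_assoc, norm_mul, norm_mul, norm_mul, norm_pow, norm_pow, Complex.norm_real,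
      Real.norm_of_nonneg hr]
    have := hM n
    gcongr
    exact (norm_nonneg _).trans this
  have hg : ∀ z ∈ Metric.ball (0:ℂ) 1,
      HasSum (fun n : ℕ => t n * c n * z ^ n) (∑' n, t n * c n * z ^ n) := fun z hz =>
    (Summable.of_norm_bounded ((hsum ‖z‖ (norm_nonneg z) (by simpa using hz)).mul_left M)
      (hbd ‖z‖ z le_rfl)).hasSum
  refine ⟨fun z => ∑' n, t n * c n * z ^ n, ?_, hg, ?_⟩
  · intro z hz
    obtain ⟨r, hzr, hr1⟩ := exists_between (show ‖z‖ < 1 by simpa using hz)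
    have hd := Complex.differentiableOn_tsum_of_summable_norm
      (F := fun n (w : ℂ) => t n * c n * w ^ n) (U := Metric.ball 0 r)
      ((hsum r ((norm_nonneg z).trans hzr.le) hr1).mul_left M)
      (fun n => by fun_prop) Metric.isOpen_ball
      (fun n w hw => hbd r w (by simpa using (mem_ball_zero_iff.1 hw).le) n)
    exact (hd.differentiableAt (Metric.isOpen_ball.mem_nhds
      (by simpa using hzr))).differentiableWithinAt
  · set g : ℂ → ℂ := fun z => ∑' n, t n * c n * z ^ n
    obtain ⟨L, hL, hLP⟩ := exists_multiplier_bound hp ht hM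
    have hLp : L ^ p ≠ ∞ := ENNReal.rpow_ne_top_of_nonneg (by linarith) hL
    have hp1 : 1 ≤ ENNReal.ofReal p := by simpa using hp.le
    have hcirc : ∀ r ∈ Set.Ioo (0:ℝ) 1,
        ∫⁻ θ in Set.Ioo (-Real.pi) Real.pi, ‖g (r * expI θ)‖ₑ ^ p ≤
          L ^ p * ∫⁻ θ in Set.Ioo (-Real.pi) Real.pi, ‖f (r * expI θ)‖ₑ ^ p := by
      intro r hr
      have hmem : ∀ θ, (r : ℂ) * expI θ ∈ Metric.ball (0:ℂ) 1 := fun θ => by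
        simpa [norm_expI, abs_of_pos hr.1] using hr.2
      refine lintegral_rpow_le_of_eLpNorm_le hp (eLpNorm_multiplier_le hp1 hL hLP
        (a := fun k => c k * (r : ℂ) ^ k) (hsum r hr.1.le hr.2) (fun θ => ?_) (fun θ => ?_))
      · simpa only [mul_pow, mul_assoc] using hc _ (hmem θ)
      · have := hg _ (hmem θ)
        simp only [mul_pow] at this
        simpa only [g, mul_pow, mul_assoc] using this
    have hnorm : ∀ r ∈ Set.Ioo (0:ℝ) 1, ∀ θ, ‖(r : ℂ) * expI θ‖ = r := fun r hr θ => by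
      simp [norm_expI, abs_of_pos hr.1]
    have hinner : ∀ h : ℂ → ℂ, ∀ r ∈ Set.Ioo (0:ℝ) 1,
        ∫⁻ θ in Set.Ioo (-Real.pi) Real.pi, ENNReal.ofReal r * ENNReal.ofReal
          (‖h (r * expI θ)‖ ^ p * lam ‖(r : ℂ) * expI θ‖) =
        ENNReal.ofReal r * ENNReal.ofReal (lam r) *
          ∫⁻ θ in Set.Ioo (-Real.pi) Real.pi, ‖h (r * expI θ)‖ₑ ^ p := by
      intro h r hr
      rw [← lintegral_const_mul' _ _ (by finiteness)]
      refine lintegral_congr fun θ => ?_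
      rw [hnorm r hr, ENNReal.ofReal_mul (by positivity), ← ofReal_norm,
        ENNReal.ofReal_rpow_of_nonneg (norm_nonneg _) (by linarith)]
      ring
    rw [lintegral_ball_polar] at hfLp ⊢
    have hmeas : AEMeasurable (fun x : ℝ × ℝ => ENNReal.ofReal x.1 * ENNReal.ofReal
        (‖f (x.1 * expI x.2)‖ ^ p * lam ‖(x.1 : ℂ) * expI x.2‖))
        ((volume.restrict (Set.Ioo 0 1)).prod
          (volume.restrict (Set.Ioo (-Real.pi) Real.pi))) := by
      rw [Measure.prod_restrict]
      have hcz : Continuous fun x : ℝ × ℝ => (x.1 : ℂ) * expI x.2 :=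
        (Complex.continuous_ofReal.comp continuous_fst).mul (continuous_expI.comp continuous_snd)
      have hmaps : ∀ x ∈ Set.Ioo (0:ℝ) 1 ×ˢ Set.Ioo (-Real.pi) Real.pi,
          ‖(x.1 : ℂ) * expI x.2‖ < 1 := fun x hx => by
        rw [hnorm x.1 hx.1]; exact hx.1.2
      have h1 : ContinuousOn (fun x : ℝ × ℝ => f (x.1 * expI x.2))
          (Set.Ioo 0 1 ×ˢ Set.Ioo (-Real.pi) Real.pi) :=
        hf.continuousOn.comp hcz.continuousOn fun x hx => by
          simpa only [mem_ball_zero_iff] using hmaps x hx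
      have h2 : ContinuousOn (fun x : ℝ × ℝ => lam ‖(x.1 : ℂ) * expI x.2‖)
          (Set.Ioo 0 1 ×ˢ Set.Ioo (-Real.pi) Real.pi) :=
        hcont.comp hcz.norm.continuousOn fun x hx => ⟨norm_nonneg _, hmaps x hx⟩
      have h3 : ContinuousOn (fun x : ℝ × ℝ => ‖f (x.1 * expI x.2)‖ ^ p
          * lam ‖(x.1 : ℂ) * expI x.2‖) (Set.Ioo 0 1 ×ˢ Set.Ioo (-Real.pi) Real.pi) :=
        (h1.norm.rpow_const fun x _ => Or.inr (by linarith)).mul h2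
      have hS : MeasurableSet (Set.Ioo (0:ℝ) 1 ×ˢ Set.Ioo (-Real.pi) Real.pi) :=
        measurableSet_Ioo.prod measurableSet_Ioo
      exact measurable_fst.ennreal_ofReal.aemeasurable.mul (h3.aemeasurable hS).ennreal_ofReal
    rw [lintegral_prod _ hmeas] at hfLp
    refine lt_of_le_of_lt ?_ (ENNReal.mul_lt_top hLp.lt_top hfLp)
    refine (lintegral_prod_le _).trans ?_
    rw [← lintegral_const_mul' _ _ hLp]
    refine setLIntegral_mono' measurableSet_Ioo fun r hr => ?_
    rw [hinner g r hr, hinner f r hr, mul_left_comm]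
    gcongr
    exact hcirc r hr
end

section
/- Let λ : [0,1) → (0,∞) be continuous with ∫₀¹ r λ(r) dr < ∞, and let 1 < p < ∞. Let f : 𝔻 → ℂ be holomorphic with Taylor expansion f(z) = ∑_{n=0}^∞ f_n zⁿ and ∫_𝔻 |f(z)|^p λ(|z|) dA(z) < ∞. Then the Taylor polynomials S_N f(z) = ∑_{n=0}^N f_n zⁿ converge to f in weighted L^p norm: lim_{N→∞} ∫_𝔻 |S_N f(z) − f(z)|^p λ(|z|) dA(z) = 0. -/
/-!
On each circle `|z| = r < 1` the partial sums of `f` satisfy a bound of M. Riesz type,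
`∫ |S_N f(r e^{iθ})|^p dθ ≤ C_p ∫ |f(r e^{iθ})|^p dθ`, with `C_p` independent of `N` and `r`.
They also converge uniformly to `f` there. Dominated convergence in the radius, with dominating
function a multiple of `r λ(r) ∫ |f(r e^{iθ})|^p dθ`, then gives the theorem.

The Riesz bound. Let `a`, `b` be polynomials with `b(0) = 0`, and put `g = a + conj b`. If
`P = S_N P + z^{N+1} a` and `conj b = z^{-N-1} S_N P` on the unit circle, then `|b| = |S_N P|` and
`|g| = |P|` there, so it suffices to bound `‖b‖_p` by `‖g‖_p` on the circle
(`exists_riesz_bound`). Let `q = p / 2`, `ε > 0`,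
`S = |a|² + |b|² + ε`, `T = |g|² + ε`, and `E = |a'|² + |b'|²`. Then
`ΔS = ΔT = 4E`, `|∇S|² ≤ 4SE`, `|∇T|² ≤ 8TE` and `T ≤ 2S`, and these give two superharmonic
functions:

* if `1/2 < q ≤ 1`, then `κ S^q - T^q` with `κ = (2q - 1) / 2^{1-q}`;
* if `q ≥ 1`, then `2 S^q - (S + 2q T)^q`.

Both are nonpositive at `0`, where `S = T`, so their circle means are nonpositive
(`mean_bound_le_one`, `mean_bound_ge_one`). In the second case
`(S + 2q T)^q ≤ (3/2) S^q + C T^q` absorbs the `S^q` term. Letting `ε → 0` gives the bound.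

Superharmonicity enters through the coordinate `z = exp ζ`, `ζ = t + iθ`: the mean
`M(t)` over the circle of radius `e^t` is concave in `t` and has a limit at `-∞`, and
`M(2t)/2 + M(0)/2 ≤ M(t)` then forces `M(0) ≤ M(-∞)` (`DirC2.mean_le`).
-/

open MeasureTheory Complex

/-! ### Circle means of superharmonic functions -/

/-- `ψ` is twice differentiable along every line in `ℂ`, with continuous directional derivatives:
`D1 v` and `D2 v` are the first and second derivatives in the direction `v`. In particular the
Laplacian of `ψ` is `D2 1 + D2 I`. -/
structure DirC2 (ψ : ℂ → ℝ) (D1 D2 : ℂ → ℂ → ℝ) : Prop where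
  h1 : ∀ v ζ : ℂ, HasDerivAt (fun s : ℝ => ψ (ζ + s * v)) (D1 v ζ) 0
  h2 : ∀ v ζ : ℂ, HasDerivAt (fun s : ℝ => D1 v (ζ + s * v)) (D2 v ζ) 0
  c0 : Continuous ψ
  c1 : ∀ v, Continuous (D1 v)
  c2 : ∀ v, Continuous (D2 v)

theorem hasDerivAt_line {ψ : ℂ → ℝ} {d : ℂ → ℝ} {v : ℂ}
    (h : ∀ ζ : ℂ, HasDerivAt (fun s : ℝ => ψ (ζ + s * v)) (d ζ) 0) (ζ : ℂ) (t : ℝ) :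
    HasDerivAt (fun s : ℝ => ψ (ζ + s * v)) (d (ζ + t * v)) t := by
  have h' := h (ζ + t * v)
  have h0 : HasDerivAt (fun s : ℝ => ψ (ζ + t * v + s * v)) (d (ζ + t * v)) (t - t) := by
    rwa [sub_self]
  have := HasDerivAt.comp_sub_const t t h0
  refine this.congr_of_eventuallyEq (Filter.Eventually.of_forall fun s => ?_)
  simp only [ofReal_sub]
  congr 1
  ring

theorem DirC2.rpow {ψ : ℂ → ℝ} {D1 D2 : ℂ → ℂ → ℝ} (h : DirC2 ψ D1 D2) (q : ℝ)
    (hpos : ∀ ζ, 0 < ψ ζ) :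
    DirC2 (fun ζ => ψ ζ ^ q) (fun v ζ => q * ψ ζ ^ (q - 1) * D1 v ζ)
      (fun v ζ => q * ψ ζ ^ (q - 1) * D2 v ζ + q * (q - 1) * ψ ζ ^ (q - 2) * D1 v ζ ^ 2) := by
  have hc : ∀ r : ℝ, Continuous fun ζ => ψ ζ ^ r := fun r =>
    h.c0.rpow_const fun ζ => Or.inl (hpos ζ).ne'
  refine ⟨fun v ζ => ?_, fun v ζ => ?_, hc q, fun v => ?_, fun v => ?_⟩
  · have := (h.h1 v ζ).rpow_const (p := q) (Or.inl (hpos _).ne')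
    refine this.congr_deriv ?_
    simp only [ofReal_zero, zero_mul, add_zero]
    ring
  · have := (((h.h1 v ζ).rpow_const (p := q - 1) (Or.inl (hpos _).ne')).const_mul q).mul (h.h2 v ζ)
    have e : q - 1 - 1 = q - 2 := by ring
    refine this.congr_deriv ?_
    simp only [ofReal_zero, zero_mul, add_zero, e]
    ring
  · exact ((hc _).const_mul q).mul (h.c1 v)
  · exact (((hc _).const_mul q).mul (h.c2 v)).add (((hc _).const_mul _).mul ((h.c1 v).pow 2))

theorem DirC2.comb {ψ φ : ℂ → ℝ} {D1 D2 E1 E2 : ℂ → ℂ → ℝ} (h : DirC2 ψ D1 D2)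
    (k : DirC2 φ E1 E2) (x y : ℝ) :
    DirC2 (fun ζ => x * ψ ζ - y * φ ζ) (fun v ζ => x * D1 v ζ - y * E1 v ζ)
      (fun v ζ => x * D2 v ζ - y * E2 v ζ) :=
  ⟨fun v ζ => ((h.h1 v ζ).const_mul x).sub ((k.h1 v ζ).const_mul y),
   fun v ζ => ((h.h2 v ζ).const_mul x).sub ((k.h2 v ζ).const_mul y),
   (h.c0.const_mul x).sub (k.c0.const_mul y),
   fun v => ((h.c1 v).const_mul x).sub ((k.c1 v).const_mul y),
   fun v => ((h.c2 v).const_mul x).sub ((k.c2 v).const_mul y)⟩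

theorem hasDerivAt_mean {ψ d : ℂ → ℝ} (hψ : Continuous ψ) (hd : Continuous d)
    (h : ∀ ζ : ℂ, HasDerivAt (fun s : ℝ => ψ (ζ + s * 1)) (d ζ) 0) (t : ℝ) :
    HasDerivAt (fun t : ℝ => ∫ θ in (-Real.pi)..Real.pi, ψ (t + θ * I))
      (∫ θ in (-Real.pi)..Real.pi, d (t + θ * I)) t := by
  have hK : IsCompact ((fun x : ℝ × ℝ => d (x.1 + x.2 * I)) ''
      (Set.Icc (t - 1) (t + 1) ×ˢ Set.Icc (-Real.pi) Real.pi)) :=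
    (isCompact_Icc.prod isCompact_Icc).image (by fun_prop)
  obtain ⟨C, hC⟩ := hK.isBounded.exists_norm_le
  refine (intervalIntegral.hasDerivAt_integral_of_dominated_loc_of_deriv_le
    (F := fun (t : ℝ) (θ : ℝ) => ψ (t + θ * I)) (F' := fun (t : ℝ) (θ : ℝ) => d (t + θ * I))
    (bound := fun _ => C) (s := Set.Icc (t - 1) (t + 1))
    (Icc_mem_nhds (by linarith) (by linarith))
    (Filter.Eventually.of_forall fun x => ?_) ?_ ?_ ?_ ?_ ?_).2
  · exact (show Continuous fun θ : ℝ => ψ (x + θ * I) by fun_prop).aestronglyMeasurable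
  · exact (show Continuous fun θ : ℝ => ψ (t + θ * I) by fun_prop).intervalIntegrable _ _
  · exact (show Continuous fun θ : ℝ => d (t + θ * I) by fun_prop).aestronglyMeasurable
  · refine Filter.Eventually.of_forall fun θ hθ x hx => hC _ ⟨(x, θ), ⟨hx, ?_⟩, rfl⟩
    rw [Set.uIoc_of_le (by linarith [Real.pi_pos])] at hθ
    exact ⟨hθ.1.le, hθ.2⟩
  · exact intervalIntegrable_const
  · refine Filter.Eventually.of_forall fun θ _ x _ => ?_
    have := hasDerivAt_line h (θ * I) x
    simpa [add_comm] using this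

/-- The second derivative in `t` of the mean over `θ` is the mean of the Laplacian, since the mean
of the second `θ`-derivative vanishes by periodicity. -/
theorem DirC2.concaveOn_mean {ψ : ℂ → ℝ} {D1 D2 : ℂ → ℂ → ℝ} (h : DirC2 ψ D1 D2)
    (hper : ∀ ζ : ℂ, D1 I (ζ + 2 * Real.pi * I) = D1 I ζ)
    (hneg : ∀ ζ, D2 1 ζ + D2 I ζ ≤ 0) :
    ConcaveOn ℝ Set.univ fun t : ℝ => ∫ θ in (-Real.pi)..Real.pi, ψ (t + θ * I) := by
  have d1 := hasDerivAt_mean h.c0 (h.c1 1) (h.h1 1)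
  have d2 := hasDerivAt_mean (h.c1 1) (h.c2 1) (h.h2 1)
  have c21 := h.c2 1
  have c2I := h.c2 I
  refine concaveOn_of_hasDerivWithinAt2_nonpos convex_univ
    (fun t _ => (d1 t).continuousAt.continuousWithinAt)
    (fun t _ => (d1 t).hasDerivWithinAt) (fun t _ => (d2 t).hasDerivWithinAt) fun t _ => ?_
  have hz : ∫ θ in (-Real.pi)..Real.pi, D2 I (t + θ * I) = 0 := by
    rw [intervalIntegral.integral_eq_sub_of_hasDerivAt
      (f := fun θ : ℝ => D1 I (t + θ * I)) (fun θ _ => hasDerivAt_line (h.h2 I) t θ)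
      ((show Continuous fun θ : ℝ => D2 I (t + θ * I) by fun_prop).intervalIntegrable _ _)]
    have := hper (t + ((-Real.pi : ℝ) : ℂ) * I)
    rw [← this, sub_eq_zero]
    congr 1
    push_cast
    ring
  rw [← add_zero (∫ θ in (-Real.pi)..Real.pi, D2 1 (t + θ * I)), ← hz,
    ← intervalIntegral.integral_add]
  · have : 0 ≤ ∫ θ in (-Real.pi)..Real.pi, -(D2 1 (t + θ * I) + D2 I (t + θ * I)) :=
      intervalIntegral.integral_nonneg (by linarith [Real.pi_pos])
        fun θ _ => by linarith [hneg (t + θ * I)]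
    rw [intervalIntegral.integral_neg] at this
    linarith
  · exact (show Continuous fun θ : ℝ => D2 1 (t + θ * I) by fun_prop).intervalIntegrable _ _
  · exact (show Continuous fun θ : ℝ => D2 I (t + θ * I) by fun_prop).intervalIntegrable _ _

/-- Mean value inequality: if `G ∘ exp` is superharmonic and `G` is continuous, then the mean of `G`
over the unit circle is at most `G 0`. -/
theorem DirC2.mean_le {G ψ : ℂ → ℝ} {D1 D2 : ℂ → ℂ → ℝ} (h : DirC2 ψ D1 D2)
    (hG : Continuous G) (hGψ : ∀ ζ, ψ ζ = G (exp ζ))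
    (hper : ∀ ζ : ℂ, D1 I (ζ + 2 * Real.pi * I) = D1 I ζ)
    (hneg : ∀ ζ, D2 1 ζ + D2 I ζ ≤ 0) :
    ∫ θ in (-Real.pi)..Real.pi, G (exp (θ * I)) ≤ 2 * Real.pi * G 0 := by
  have hconc := h.concaveOn_mean hper hneg
  set M : ℝ → ℝ := fun t => ∫ θ in (-Real.pi)..Real.pi, ψ (t + θ * I) with hM
  have hcont : Continuous fun r : ℝ => ∫ θ in (-Real.pi)..Real.pi, G (r * exp (θ * I)) := by
    apply intervalIntegral.continuous_parametric_intervalIntegral_of_continuous'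
    simp only [Function.uncurry_def]
    fun_prop
  have hlim : Filter.Tendsto M Filter.atBot (nhds (2 * Real.pi * G 0)) := by
    have h1 := (hcont.tendsto 0).comp Real.tendsto_exp_atBot
    have e1 : M = (fun r : ℝ => ∫ θ in (-Real.pi)..Real.pi, G (r * exp (θ * I))) ∘ Real.exp := by
      ext t
      simp [hM, hGψ, exp_add]
    rw [e1]
    convert h1 using 2
    simp
    left; ring
  have hlim2 : Filter.Tendsto (fun t => M (2 * t)) Filter.atBot (nhds (2 * Real.pi * G 0)) :=
    hlim.comp (Filter.tendsto_id.const_mul_atBot (by norm_num))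
  have h0 : M 0 = ∫ θ in (-Real.pi)..Real.pi, G (exp (θ * I)) := by simp [hM, hGψ]
  rw [← h0]
  -- `t` is the midpoint of `2 * t` and `0`.
  have hineq : ∀ t, (1 / 2 : ℝ) * M (2 * t) + (1 / 2) * M 0 ≤ M t := fun t => by
    have := hconc.2 (Set.mem_univ (2 * t)) (Set.mem_univ 0)
      (show (0 : ℝ) ≤ 1 / 2 by norm_num) (show (0 : ℝ) ≤ 1 / 2 by norm_num) (by norm_num)
    simp only [smul_eq_mul] at this
    rwa [show (1 / 2 : ℝ) * (2 * t) + 1 / 2 * 0 = t by ring] at this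
  have := le_of_tendsto_of_tendsto' ((hlim2.const_mul (1 / 2)).add_const (1 / 2 * M 0)) hlim hineq
  linarith

open scoped ComplexConjugate

/-! ### The quadratic expressions `S`, `T` and their derivatives -/

/-- The real function `m (|a|² + |b|²) + 2 y Re (a b) + e`. Since
`|a + conj b|² = |a|² + |b|² + 2 Re (a b)`, the case `m = 1, y = 0` is `S = |a|² + |b|² + e`
and the case `m = 1, y = 1` is `T = |a + conj b|² + e`. -/
def quad (a b : ℂ → ℂ) (m y e : ℝ) (ζ : ℂ) : ℝ :=
  m * (normSq (a ζ) + normSq (b ζ)) + 2 * y * (a ζ * b ζ).re + e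

/-- The derivative of `quad a b m y e` in the direction `v`, where `a' = a1` and `b' = b1`. -/
def quadD1 (a a1 b b1 : ℂ → ℂ) (m y : ℝ) (v ζ : ℂ) : ℝ :=
  2 * (v * (m * (conj (a ζ) * a1 ζ + conj (b ζ) * b1 ζ) + y * (a1 ζ * b ζ + a ζ * b1 ζ))).re

/-- The second derivative of `quad a b m y e` in the direction `v`, where `a'' = a2`, `b'' = b2`. -/
def quadD2 (a a1 a2 b b1 b2 : ℂ → ℂ) (m y : ℝ) (v ζ : ℂ) : ℝ :=
  2 * m * normSq v * (normSq (a1 ζ) + normSq (b1 ζ)) +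
  2 * (v ^ 2 * (m * (conj (a ζ) * a2 ζ + conj (b ζ) * b2 ζ) +
    y * (a2 ζ * b ζ + 2 * (a1 ζ * b1 ζ) + a ζ * b2 ζ))).re

theorem hasDerivAt_dir {a a1 : ℂ → ℂ} (ha : ∀ ζ, HasDerivAt a (a1 ζ) ζ) (v ζ : ℂ) :
    HasDerivAt (fun s : ℝ => a (ζ + s * v)) (a1 ζ * v) 0 := by
  have h1 : HasDerivAt (fun s : ℝ => ζ + (s : ℂ) * v) v 0 := by
    simpa using ((hasDerivAt_id (0 : ℝ)).ofReal_comp.mul_const v).const_add ζ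
  have := HasDerivAt.comp (𝕜' := ℂ) (0 : ℝ) (h₂ := a) (h₂' := a1 ζ) (by simpa using ha ζ) h1
  exact this

theorem hasDerivAt_re {f : ℝ → ℂ} {f' : ℂ} {t : ℝ} (h : HasDerivAt f f' t) :
    HasDerivAt (fun s => (f s).re) f'.re t :=
  reCLM.hasFDerivAt.comp_hasDerivAt t h

theorem hasDerivAt_conj {f : ℝ → ℂ} {f' : ℂ} {t : ℝ} (h : HasDerivAt f f' t) :
    HasDerivAt (fun s => conj (f s)) (conj f') t :=
  (conjCLE : ℂ →L[ℝ] ℂ).hasFDerivAt.comp_hasDerivAt t h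

theorem quad_dirC2 {a a1 a2 b b1 b2 : ℂ → ℂ} (ha : ∀ ζ, HasDerivAt a (a1 ζ) ζ)
    (ha1 : ∀ ζ, HasDerivAt a1 (a2 ζ) ζ) (ha2 : Continuous a2)
    (hb : ∀ ζ, HasDerivAt b (b1 ζ) ζ)
    (hb1 : ∀ ζ, HasDerivAt b1 (b2 ζ) ζ) (hb2 : Continuous b2) (m y e : ℝ) :
    DirC2 (quad a b m y e) (quadD1 a a1 b b1 m y) (quadD2 a a1 a2 b b1 b2 m y) := by
  have ca : Continuous a := continuous_iff_continuousAt.2 fun ζ => (ha ζ).continuousAt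
  have cb : Continuous b := continuous_iff_continuousAt.2 fun ζ => (hb ζ).continuousAt
  have ca1 : Continuous a1 := continuous_iff_continuousAt.2 fun ζ => (ha1 ζ).continuousAt
  have cb1 : Continuous b1 := continuous_iff_continuousAt.2 fun ζ => (hb1 ζ).continuousAt
  refine ⟨fun v ζ => ?_, fun v ζ => ?_, ?_, fun v => ?_, fun v => ?_⟩
  · have da := hasDerivAt_dir ha v ζ
    have db := hasDerivAt_dir hb v ζ
    have h := (((hasDerivAt_re (((hasDerivAt_conj da).mul da).add
      ((hasDerivAt_conj db).mul db))).const_mul m).add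
      ((hasDerivAt_re (da.mul db)).const_mul (2 * y))).add_const e
    refine (h.congr_deriv ?_).congr_of_eventuallyEq (Filter.Eventually.of_forall fun s => ?_)
    · simp [quadD1]
      ring
    · simp [quad, normSq_apply]
  · have da := hasDerivAt_dir ha v ζ
    have db := hasDerivAt_dir hb v ζ
    have da1 := hasDerivAt_dir ha1 v ζ
    have db1 := hasDerivAt_dir hb1 v ζ
    have h := (hasDerivAt_re ((((((hasDerivAt_conj da).mul da1).add
      ((hasDerivAt_conj db).mul db1)).const_mul (m : ℂ)).add
      (((da1.mul db).add (da.mul db1)).const_mul (y : ℂ))).const_mul v)).const_mul 2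
    refine (h.congr_deriv ?_).congr_of_eventuallyEq (Filter.Eventually.of_forall fun s => ?_)
    · simp [quadD2, normSq_apply, pow_two]
      ring
    · simp [quadD1]
  · unfold quad; fun_prop
  · unfold quadD1; fun_prop
  · unfold quadD2; fun_prop

/-- The Laplacian of `quad`: the terms containing `v ^ 2` cancel because `1 ^ 2 + I ^ 2 = 0`. -/
theorem quadD2_add (a a1 a2 b b1 b2 : ℂ → ℂ) (m y : ℝ) (ζ : ℂ) :
    quadD2 a a1 a2 b b1 b2 m y 1 ζ + quadD2 a a1 a2 b b1 b2 m y I ζ =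
      4 * m * (normSq (a1 ζ) + normSq (b1 ζ)) := by
  simp only [quadD2, normSq_one, normSq_I, one_pow, I_sq, one_mul, neg_mul, neg_re]
  ring

theorem quad_one_one (a b : ℂ → ℂ) (e : ℝ) (ζ : ℂ) :
    quad a b 1 1 e ζ = normSq (a ζ + conj (b ζ)) + e := by
  simp [quad, normSq_apply]
  ring

theorem quadD1_sq_add (a a1 b b1 : ℂ → ℂ) (m y : ℝ) (ζ : ℂ) :
    quadD1 a a1 b b1 m y 1 ζ ^ 2 + quadD1 a a1 b b1 m y I ζ ^ 2 =
      4 * normSq (m * (conj (a ζ) * a1 ζ + conj (b ζ) * b1 ζ) + y * (a1 ζ * b ζ + a ζ * b1 ζ)) := by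
  simp only [quadD1, one_mul, I_mul_re, normSq_apply]
  ring

/-- The gradient bound `|∇S|² ≤ 4 S E`. -/
theorem quadD1_bound_S (a a1 b b1 : ℂ → ℂ) {e : ℝ} (he : 0 < e) (ζ : ℂ) :
    quadD1 a a1 b b1 1 0 1 ζ ^ 2 + quadD1 a a1 b b1 1 0 I ζ ^ 2 ≤
      4 * quad a b 1 0 e ζ * (normSq (a1 ζ) + normSq (b1 ζ)) := by
  rw [quadD1_sq_add]
  have h1 : ‖conj (a ζ) * a1 ζ + conj (b ζ) * b1 ζ‖ ≤ ‖a ζ‖ * ‖a1 ζ‖ + ‖b ζ‖ * ‖b1 ζ‖ := by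
    refine (norm_add_le _ _).trans (le_of_eq ?_)
    simp
  have h2 : ‖conj (a ζ) * a1 ζ + conj (b ζ) * b1 ζ‖ ^ 2 ≤
      (‖a ζ‖ * ‖a1 ζ‖ + ‖b ζ‖ * ‖b1 ζ‖) ^ 2 := by gcongr
  have h3 : 0 ≤ e * (‖a1 ζ‖ ^ 2 + ‖b1 ζ‖ ^ 2) := by positivity
  simp only [quad, normSq_eq_norm_sq, ofReal_one, ofReal_zero, one_mul, zero_mul, add_zero,
    mul_zero]
  nlinarith [sq_nonneg (‖a ζ‖ * ‖b1 ζ‖ - ‖b ζ‖ * ‖a1 ζ‖)]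

/-- The gradient bound `|∇T|² ≤ 8 T E`. -/
theorem quadD1_bound_T (a a1 b b1 : ℂ → ℂ) {e : ℝ} (he : 0 < e) (ζ : ℂ) :
    quadD1 a a1 b b1 1 1 1 ζ ^ 2 + quadD1 a a1 b b1 1 1 I ζ ^ 2 ≤
      8 * quad a b 1 1 e ζ * (normSq (a1 ζ) + normSq (b1 ζ)) := by
  rw [quadD1_sq_add, quad_one_one]
  set g := a ζ + conj (b ζ) with hg
  have e1 : ((1 : ℝ) : ℂ) * (conj (a ζ) * a1 ζ + conj (b ζ) * b1 ζ) +
      ((1 : ℝ) : ℂ) * (a1 ζ * b ζ + a ζ * b1 ζ) = a1 ζ * conj g + b1 ζ * g := by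
    simp [hg]
    ring
  rw [e1]
  have h1 : ‖a1 ζ * conj g + b1 ζ * g‖ ≤ ‖a1 ζ‖ * ‖g‖ + ‖b1 ζ‖ * ‖g‖ := by
    refine (norm_add_le _ _).trans (le_of_eq ?_)
    simp
  have h2 : ‖a1 ζ * conj g + b1 ζ * g‖ ^ 2 ≤ (‖a1 ζ‖ * ‖g‖ + ‖b1 ζ‖ * ‖g‖) ^ 2 := by gcongr
  have h3 : 0 ≤ e * (‖a1 ζ‖ ^ 2 + ‖b1 ζ‖ ^ 2) := by positivity
  simp only [normSq_eq_norm_sq]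
  nlinarith [sq_nonneg (‖a1 ζ‖ * ‖g‖ - ‖b1 ζ‖ * ‖g‖)]

theorem quad_T_le (a b : ℂ → ℂ) {e : ℝ} (he : 0 < e) (ζ : ℂ) :
    quad a b 1 1 e ζ ≤ 2 * quad a b 1 0 e ζ := by
  simp [quad, normSq_apply]
  nlinarith [sq_nonneg ((a ζ).re - (b ζ).re), sq_nonneg ((a ζ).im + (b ζ).im)]

theorem quad_S_pos (a b : ℂ → ℂ) {e : ℝ} (he : 0 < e) (ζ : ℂ) : 0 < quad a b 1 0 e ζ := by
  have := normSq_nonneg (a ζ)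
  have := normSq_nonneg (b ζ)
  simp only [quad]
  linarith

theorem quad_T_pos (a b : ℂ → ℂ) {e : ℝ} (he : 0 < e) (ζ : ℂ) : 0 < quad a b 1 1 e ζ := by
  rw [quad_one_one]
  have := normSq_nonneg (a ζ + conj (b ζ))
  linarith

theorem quad_comb (a b : ℂ → ℂ) (K e : ℝ) (ζ : ℂ) :
    quad a b (1 + K) K ((1 + K) * e) ζ = quad a b 1 0 e ζ + K * quad a b 1 1 e ζ := by
  simp only [quad]
  ring

/-! ### Two superharmonic functions -/

theorem rpow_sub_one_eq {S : ℝ} (hS : 0 < S) (q : ℝ) : S ^ (q - 1) = S ^ (q - 2) * S := by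
  rw [show q - 1 = (q - 2) + 1 by ring, Real.rpow_add_one hS.ne']

theorem eval_exp_hasDerivAt (a : Polynomial ℂ) (ζ : ℂ) :
    HasDerivAt (fun ζ => a.eval (exp ζ))
      ((Polynomial.X * Polynomial.derivative a).eval (exp ζ)) ζ := by
  have := (a.hasDerivAt (exp ζ)).comp ζ (hasDerivAt_exp ζ)
  refine this.congr_deriv ?_
  simp
  ring

theorem quad_continuous {a b : ℂ → ℂ} (ha : Continuous a) (hb : Continuous b) (m y e : ℝ) :
    Continuous (quad a b m y e) := by
  unfold quad; fun_prop

/-- If `x Q^q - Q'^q` is superharmonic and nonpositive at `0`, where `Q` and `Q'` are two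
expressions of the form `quad`, then its mean over the unit circle is nonpositive. Hypothesis
`hlap` is the inequality between the Laplacians `q Q^{q-1} ΔQ + q (q-1) Q^{q-2} |∇Q|²`. -/
theorem quad_mean_le (a b : Polynomial ℂ) (q x m y e m' y' e' : ℝ)
    (hS : ∀ z, 0 < quad a.eval b.eval m y e z) (hR : ∀ z, 0 < quad a.eval b.eval m' y' e' z)
    (h0 : x * quad a.eval b.eval m y e 0 ^ q ≤ quad a.eval b.eval m' y' e' 0 ^ q)
    (hlap : ∀ (a a1 b b1 : ℂ → ℂ) (ζ : ℂ),
      0 < quad a b m y e ζ → 0 < quad a b m' y' e' ζ →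
      x * (q * quad a b m y e ζ ^ (q - 1) * (4 * m * (normSq (a1 ζ) + normSq (b1 ζ))) +
        q * (q - 1) * quad a b m y e ζ ^ (q - 2) *
          (quadD1 a a1 b b1 m y 1 ζ ^ 2 + quadD1 a a1 b b1 m y I ζ ^ 2)) ≤
      (q * quad a b m' y' e' ζ ^ (q - 1) * (4 * m' * (normSq (a1 ζ) + normSq (b1 ζ))) +
        q * (q - 1) * quad a b m' y' e' ζ ^ (q - 2) *
          (quadD1 a a1 b b1 m' y' 1 ζ ^ 2 + quadD1 a a1 b b1 m' y' I ζ ^ 2))) :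
    x * ∫ θ in (-Real.pi)..Real.pi, quad a.eval b.eval m y e (exp (θ * I)) ^ q ≤
      ∫ θ in (-Real.pi)..Real.pi, quad a.eval b.eval m' y' e' (exp (θ * I)) ^ q := by
  set D := fun a : Polynomial ℂ => Polynomial.X * Polynomial.derivative a with hD
  have key := fun m y e => quad_dirC2 (eval_exp_hasDerivAt a) (eval_exp_hasDerivAt (D a))
    (show Continuous fun ζ => (D (D a)).eval (exp ζ) by fun_prop)
    (eval_exp_hasDerivAt b) (eval_exp_hasDerivAt (D b))
    (show Continuous fun ζ => (D (D b)).eval (exp ζ) by fun_prop) m y e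
  have hW := ((key m y e).rpow q (fun ζ => hS (exp ζ))).comb
    ((key m' y' e').rpow q (fun ζ => hR (exp ζ))) x 1
  have c1 : Continuous fun z => quad a.eval b.eval m y e z ^ q :=
    (quad_continuous a.continuous b.continuous m y e).rpow_const fun z => Or.inl (hS z).ne'
  have c2 : Continuous fun z => quad a.eval b.eval m' y' e' z ^ q :=
    (quad_continuous a.continuous b.continuous m' y' e').rpow_const fun z => Or.inl (hR z).ne'
  have := hW.mean_le
    (G := fun z => x * quad a.eval b.eval m y e z ^ q - 1 * quad a.eval b.eval m' y' e' z ^ q)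
    ((c1.const_mul x).sub (c2.const_mul 1))
    (fun ζ => rfl) (fun ζ => by
      have hp : exp (ζ + 2 * Real.pi * I) = exp ζ := exp_periodic ζ
      simp only [quad, quadD1, hp]) (fun ζ => by
      have h1 := hlap (fun ζ => a.eval (exp ζ)) (fun ζ => (D a).eval (exp ζ))
        (fun ζ => b.eval (exp ζ)) (fun ζ => (D b).eval (exp ζ)) ζ
        (hS (exp ζ)) (hR (exp ζ))
      have e1 := fun m y => quadD2_add (fun ζ => a.eval (exp ζ)) (fun ζ => (D a).eval (exp ζ))
        (fun ζ => (D (D a)).eval (exp ζ)) (fun ζ => b.eval (exp ζ)) (fun ζ => (D b).eval (exp ζ))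
        (fun ζ => (D (D b)).eval (exp ζ)) m y ζ
      rw [← e1 m y, ← e1 m' y'] at h1
      linarith)
  rw [intervalIntegral.integral_sub, intervalIntegral.integral_const_mul,
    intervalIntegral.integral_const_mul] at this
  · nlinarith [Real.pi_pos]
  · exact (show Continuous fun θ : ℝ => x * quad a.eval b.eval m y e (exp (θ * I)) ^ q from
      (c1.comp (by fun_prop : Continuous fun θ : ℝ => exp (θ * I))).const_mul x).intervalIntegrable _ _
  · exact (show Continuous fun θ : ℝ => 1 * quad a.eval b.eval m' y' e' (exp (θ * I)) ^ q from
      (c2.comp (by fun_prop : Continuous fun θ : ℝ => exp (θ * I))).const_mul 1).intervalIntegrable _ _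

theorem mean_bound_ge_one (a b : Polynomial ℂ) (hb : b.eval 0 = 0) {q e : ℝ} (hq : 1 ≤ q)
    (he : 0 < e) :
    2 * ∫ θ in (-Real.pi)..Real.pi, quad a.eval b.eval 1 0 e (exp (θ * I)) ^ q ≤
      ∫ θ in (-Real.pi)..Real.pi,
        quad a.eval b.eval (1 + 2 * q) (2 * q) ((1 + 2 * q) * e) (exp (θ * I)) ^ q := by
  apply quad_mean_le
  · exact quad_S_pos _ _ he
  · intro z
    rw [quad_comb]
    have := quad_S_pos a.eval b.eval he z
    have := quad_T_pos a.eval b.eval he z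
    positivity
  · rw [quad_comb]
    have h1 := quad_S_pos a.eval b.eval he 0
    have e1 : quad a.eval b.eval 1 1 e 0 = quad a.eval b.eval 1 0 e 0 := by simp [quad, hb]
    rw [e1]
    set S := quad a.eval b.eval 1 0 e 0
    have h2 : 2 * S ^ q ≤ (2 * S) ^ q := by
      rw [Real.mul_rpow (by norm_num) h1.le]
      gcongr
      simpa using Real.rpow_le_rpow_of_exponent_le (by norm_num : (1 : ℝ) ≤ 2) hq
    refine h2.trans ?_
    gcongr
    nlinarith
  · intro a a1 b b1 ζ hS hR
    have hg := quadD1_bound_S a a1 b b1 he ζ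
    have hSR : quad a b 1 0 e ζ ≤ quad a b (1 + 2 * q) (2 * q) ((1 + 2 * q) * e) ζ := by
      rw [quad_comb]
      have := quad_T_pos a b he ζ
      have : 0 ≤ 2 * q * quad a b 1 1 e ζ := by positivity
      linarith
    set S := quad a b 1 0 e ζ
    set R := quad a b (1 + 2 * q) (2 * q) ((1 + 2 * q) * e) ζ
    set g := quadD1 a a1 b b1 1 0 1 ζ ^ 2 + quadD1 a a1 b b1 1 0 I ζ ^ 2
    set g' := quadD1 a a1 b b1 (1 + 2 * q) (2 * q) 1 ζ ^ 2 +
      quadD1 a a1 b b1 (1 + 2 * q) (2 * q) I ζ ^ 2 with hg'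
    have hE : 0 ≤ normSq (a1 ζ) + normSq (b1 ζ) := add_nonneg (normSq_nonneg _) (normSq_nonneg _)
    set E := normSq (a1 ζ) + normSq (b1 ζ)
    have hg'0 : 0 ≤ g' := by positivity
    have hq1 : 0 ≤ q - 1 := by linarith
    calc 2 * (q * S ^ (q - 1) * (4 * 1 * E) + q * (q - 1) * S ^ (q - 2) * g)
        ≤ 2 * (q * S ^ (q - 1) * (4 * 1 * E) + q * (q - 1) * S ^ (q - 2) * (4 * S * E)) := by
          gcongr
      _ = q * S ^ (q - 1) * (4 * (2 * q) * E) := by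
          rw [rpow_sub_one_eq hS]; ring
      _ ≤ q * R ^ (q - 1) * (4 * (1 + 2 * q) * E) := by
          gcongr
          linarith
      _ ≤ _ := by
          have : 0 ≤ q * (q - 1) * R ^ (q - 2) * g' := by positivity
          linarith

theorem mean_bound_le_one (a b : Polynomial ℂ) (hb : b.eval 0 = 0) {q e : ℝ} (hq : 1 / 2 < q)
    (hq1 : q ≤ 1) (he : 0 < e) :
    ((2 * q - 1) / 2 ^ (1 - q)) *
      ∫ θ in (-Real.pi)..Real.pi, quad a.eval b.eval 1 0 e (exp (θ * I)) ^ q ≤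
      ∫ θ in (-Real.pi)..Real.pi, quad a.eval b.eval 1 1 e (exp (θ * I)) ^ q := by
  have h2q : (1 : ℝ) ≤ 2 ^ (1 - q) := Real.one_le_rpow (by norm_num) (by linarith)
  have hx0 : 0 ≤ (2 * q - 1) / (2 : ℝ) ^ (1 - q) := div_nonneg (by linarith) (by linarith)
  apply quad_mean_le
  · exact quad_S_pos _ _ he
  · exact quad_T_pos _ _ he
  · have h1 := quad_S_pos a.eval b.eval he 0
    have e1 : quad a.eval b.eval 1 1 e 0 = quad a.eval b.eval 1 0 e 0 := by simp [quad, hb]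
    rw [e1]
    refine mul_le_of_le_one_left (by positivity) ?_
    rw [div_le_one (by linarith)]
    linarith
  · intro a a1 b b1 ζ hS hT
    have hg := quadD1_bound_T a a1 b b1 he ζ
    have hST := quad_T_le a b he ζ
    set S := quad a b 1 0 e ζ
    set T := quad a b 1 1 e ζ
    set g := quadD1 a a1 b b1 1 0 1 ζ ^ 2 + quadD1 a a1 b b1 1 0 I ζ ^ 2 with hg0
    set g' := quadD1 a a1 b b1 1 1 1 ζ ^ 2 + quadD1 a a1 b b1 1 1 I ζ ^ 2 with hg'
    have hE : 0 ≤ normSq (a1 ζ) + normSq (b1 ζ) := add_nonneg (normSq_nonneg _) (normSq_nonneg _)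
    set E := normSq (a1 ζ) + normSq (b1 ζ)
    have hgnn : 0 ≤ g := by positivity
    have hq0 : 0 < q := by linarith
    have hq1' : 0 ≤ 1 - q := by linarith
    have hpow : S ^ (q - 1) ≤ 2 ^ (1 - q) * T ^ (q - 1) := by
      have h3 : (2 * S) ^ (q - 1) ≤ T ^ (q - 1) :=
        Real.rpow_le_rpow_of_nonpos hT hST (by linarith)
      rw [Real.mul_rpow (by norm_num) hS.le] at h3
      calc S ^ (q - 1) = 2 ^ (1 - q) * (2 ^ (q - 1) * S ^ (q - 1)) := by
            rw [← mul_assoc, ← Real.rpow_add (by norm_num)]; simp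
        _ ≤ _ := by gcongr
    have hA : q * (q - 1) * S ^ (q - 2) * g ≤ 0 := by
      have : 0 ≤ q * (1 - q) * S ^ (q - 2) * g := by positivity
      linarith
    have hB : q * (1 - q) * T ^ (q - 2) * g' ≤ q * (1 - q) * T ^ (q - 2) * (8 * T * E) := by
      gcongr
    calc (2 * q - 1) / 2 ^ (1 - q) * (q * S ^ (q - 1) * (4 * 1 * E) + q * (q - 1) * S ^ (q - 2) * g)
        ≤ (2 * q - 1) / 2 ^ (1 - q) * (q * (2 ^ (1 - q) * T ^ (q - 1)) * (4 * 1 * E) + 0) := by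
          gcongr
      _ = q * T ^ (q - 1) * (4 * 1 * E) - q * (1 - q) * T ^ (q - 2) * (8 * T * E) := by
          rw [rpow_sub_one_eq hT]
          field_simp
          ring
      _ ≤ _ := by linarith

/-! ### The M. Riesz bound for partial sums -/

theorem add_rpow_le_weighted {q K : ℝ} (hq : 1 ≤ q) (hK : 0 < K) :
    ∃ C : ℝ, 0 < C ∧ ∀ S T : ℝ, 0 < S → 0 < T →
      (S + K * T) ^ q ≤ 3 / 2 * S ^ q + C * T ^ q := by
  have hq0 : 0 < q := by linarith
  obtain ⟨δ, hδ, hδq⟩ : ∃ δ : ℝ, 0 < δ ∧ (1 + δ) ^ q = 3 / 2 := by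
    refine ⟨(3 / 2) ^ (1 / q) - 1, ?_, ?_⟩
    · have := Real.one_lt_rpow (x := 3 / 2) (z := 1 / q) (by norm_num) (by positivity)
      linarith
    · rw [add_sub_cancel, ← Real.rpow_mul (by norm_num), one_div_mul_cancel hq0.ne', Real.rpow_one]
  refine ⟨(K / δ + K) ^ q, by positivity, fun S T hS hT => ?_⟩
  rcases le_total (K * T) (δ * S) with h | h
  · calc (S + K * T) ^ q ≤ ((1 + δ) * S) ^ q := by
          gcongr
          linarith
      _ = 3 / 2 * S ^ q := by rw [Real.mul_rpow (by positivity) hS.le, hδq]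
      _ ≤ _ := by
          have : 0 ≤ (K / δ + K) ^ q * T ^ q := by positivity
          linarith
  · have h1 : S ≤ K / δ * T := by
      rw [div_mul_eq_mul_div, le_div_iff₀ hδ]
      linarith
    calc (S + K * T) ^ q ≤ ((K / δ + K) * T) ^ q := by
          gcongr
          linarith
      _ = (K / δ + K) ^ q * T ^ q := by rw [Real.mul_rpow (by positivity) hT.le]
      _ ≤ _ := by
          have : 0 ≤ S ^ q := by positivity
          linarith

theorem quad_circle_continuous (a b : Polynomial ℂ) (m y e : ℝ) {q : ℝ} (hq : 0 < q) :
    Continuous fun θ : ℝ => quad a.eval b.eval m y e (exp (θ * I)) ^ q :=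
  ((quad_continuous a.continuous b.continuous m y e).comp
    (by fun_prop : Continuous fun θ : ℝ => exp (θ * I))).rpow_const fun _ => Or.inr hq.le

theorem exists_mean_bound {q : ℝ} (hq : 1 / 2 < q) :
    ∃ C : ℝ, 0 < C ∧ ∀ a b : Polynomial ℂ, b.eval 0 = 0 → ∀ e : ℝ, 0 < e →
      ∫ θ in (-Real.pi)..Real.pi, quad a.eval b.eval 1 0 e (exp (θ * I)) ^ q ≤
      C * ∫ θ in (-Real.pi)..Real.pi, quad a.eval b.eval 1 1 e (exp (θ * I)) ^ q := by
  have hq0 : 0 < q := by linarith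
  rcases le_total q 1 with h | h
  · have hpos : 0 < (2 * q - 1) / (2 : ℝ) ^ (1 - q) := div_pos (by linarith) (by positivity)
    refine ⟨((2 * q - 1) / (2 : ℝ) ^ (1 - q))⁻¹, inv_pos.2 hpos, fun a b hb e he => ?_⟩
    rw [← div_eq_inv_mul, le_div_iff₀ hpos, mul_comm]
    exact mean_bound_le_one a b hb hq h he
  · obtain ⟨C, hC, hCb⟩ := add_rpow_le_weighted h (show 0 < 2 * q by positivity)
    refine ⟨2 * C, by positivity, fun a b hb e he => ?_⟩
    have h1 := mean_bound_ge_one a b hb h he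
    have cS := quad_circle_continuous a b 1 0 e hq0
    have cT := quad_circle_continuous a b 1 1 e hq0
    have h2 : ∫ θ in (-Real.pi)..Real.pi,
        quad a.eval b.eval (1 + 2 * q) (2 * q) ((1 + 2 * q) * e) (exp (θ * I)) ^ q ≤
        ∫ θ in (-Real.pi)..Real.pi, (3 / 2 * quad a.eval b.eval 1 0 e (exp (θ * I)) ^ q +
          C * quad a.eval b.eval 1 1 e (exp (θ * I)) ^ q) := by
      refine intervalIntegral.integral_mono_on (by linarith [Real.pi_pos])
        ((quad_circle_continuous a b _ _ _ hq0).intervalIntegrable _ _)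
        (((cS.const_mul _).add (cT.const_mul _)).intervalIntegrable _ _) fun θ _ => ?_
      rw [quad_comb]
      exact hCb _ _ (quad_S_pos _ _ he _) (quad_T_pos _ _ he _)
    rw [intervalIntegral.integral_add ((cS.const_mul _).intervalIntegrable _ _)
      ((cT.const_mul _).intervalIntegrable _ _), intervalIntegral.integral_const_mul,
      intervalIntegral.integral_const_mul] at h2
    linarith

/-- M. Riesz inequality: the antianalytic part of a trigonometric polynomial is controlled in `L^p`
by the whole polynomial. -/
theorem exists_riesz_bound {p : ℝ} (hp : 1 < p) :
    ∃ C : ℝ, 0 < C ∧ ∀ a b : Polynomial ℂ, b.eval 0 = 0 →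
      ∫ θ in (-Real.pi)..Real.pi, ‖b.eval (exp (θ * I))‖ ^ p ≤
      C * ∫ θ in (-Real.pi)..Real.pi, ‖a.eval (exp (θ * I)) + conj (b.eval (exp (θ * I)))‖ ^ p := by
  obtain ⟨C, hC, h⟩ := exists_mean_bound (q := p / 2) (by linarith)
  refine ⟨C, hC, fun a b hb => ?_⟩
  have hnorm : ∀ w : ℂ, normSq w ^ (p / 2) = ‖w‖ ^ p := fun w => by
    rw [normSq_eq_norm_sq, ← Real.rpow_natCast, ← Real.rpow_mul (norm_nonneg _)]
    congr 1
    push_cast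
    ring
  have cb : Continuous fun θ : ℝ => ‖b.eval (exp (θ * I))‖ ^ p :=
    (show Continuous fun θ : ℝ => ‖b.eval (exp (θ * I))‖ by fun_prop).rpow_const
      fun _ => Or.inr (by linarith)
  have hcont : Continuous fun e : ℝ =>
      C * ∫ θ in (-Real.pi)..Real.pi, quad a.eval b.eval 1 1 e (exp (θ * I)) ^ (p / 2) := by
    refine (intervalIntegral.continuous_parametric_intervalIntegral_of_continuous' ?_ _ _).const_mul C
    refine Continuous.rpow_const ?_ fun _ => Or.inr (by linarith)
    simp only [quad]
    fun_prop
  have hlim := (hcont.tendsto 0).mono_left (nhdsWithin_le_nhds (s := Set.Ioi 0))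
  simp only [quad_one_one, add_zero, hnorm] at hlim
  refine ge_of_tendsto hlim ?_
  filter_upwards [self_mem_nhdsWithin] with e he
  have he : 0 < e := he
  have := h a b hb e he
  simp only [quad_one_one] at this
  refine le_trans ?_ this
  refine intervalIntegral.integral_mono_on (by linarith [Real.pi_pos]) (cb.intervalIntegrable _ _)
    ((quad_circle_continuous a b _ _ _ (by linarith)).intervalIntegrable _ _) fun θ _ => ?_
  rw [← hnorm]
  refine Real.rpow_le_rpow (normSq_nonneg _) ?_ (by linarith)
  have := normSq_nonneg (a.eval (exp (θ * I)))
  simp only [quad]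
  linarith

/-- Multiplying by `z ^ (-(N + 1))` turns the truncation at degree `N` into the antianalytic part. -/
theorem exists_partial_sum_bound {p : ℝ} (hp : 1 < p) :
    ∃ C : ℝ, 0 < C ∧ ∀ (c : ℕ → ℂ) (N M : ℕ),
      ∫ θ in (-Real.pi)..Real.pi, ‖∑ n ∈ Finset.range (N + 1), c n * exp (θ * I) ^ n‖ ^ p ≤
      C * ∫ θ in (-Real.pi)..Real.pi,
        ‖∑ n ∈ Finset.range (N + 1 + M), c n * exp (θ * I) ^ n‖ ^ p := by
  obtain ⟨C, hC, h⟩ := exists_riesz_bound hp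
  refine ⟨C, hC, fun c N M => ?_⟩
  set a : Polynomial ℂ :=
    ∑ k ∈ Finset.range M, Polynomial.C (c (N + 1 + k)) * Polynomial.X ^ k with ha
  set b : Polynomial ℂ :=
    ∑ n ∈ Finset.range (N + 1), Polynomial.C (conj (c n)) * Polynomial.X ^ (N + 1 - n) with hb
  have hb0 : b.eval 0 = 0 := by
    rw [hb, Polynomial.eval_finsetSum]
    refine Finset.sum_eq_zero fun n hn => ?_
    have : N + 1 - n ≠ 0 := by have := Finset.mem_range.1 hn; omega
    simp [this]
  have hz : ∀ θ : ℝ, ‖exp (θ * I)‖ = 1 := norm_exp_ofReal_mul_I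
  have hbz : ∀ θ : ℝ, exp (θ * I) ^ (N + 1) * conj (b.eval (exp (θ * I))) =
      ∑ n ∈ Finset.range (N + 1), c n * exp (θ * I) ^ n := fun θ => by
    have hzz : exp (θ * I) * conj (exp (θ * I)) = 1 := by
      rw [mul_conj, normSq_eq_norm_sq, hz]; simp
    generalize exp (θ * I) = z at *
    rw [hb, Polynomial.eval_finsetSum, map_sum, Finset.mul_sum]
    refine Finset.sum_congr rfl fun n hn => ?_
    have hn' := Finset.mem_range.1 hn
    obtain ⟨k, hk⟩ := Nat.exists_eq_add_of_le hn'.le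
    rw [show N + 1 - n = k by omega, hk]
    simp only [Polynomial.eval_mul, Polynomial.eval_C, Polynomial.eval_pow, Polynomial.eval_X,
      map_mul, map_pow, conj_conj]
    calc z ^ (n + k) * (c n * conj z ^ k) = c n * z ^ n * (z * conj z) ^ k := by
          rw [mul_pow, pow_add]; ring
      _ = _ := by rw [hzz, one_pow, mul_one]
  have hpz : ∀ θ : ℝ, exp (θ * I) ^ (N + 1) *
      (a.eval (exp (θ * I)) + conj (b.eval (exp (θ * I)))) =
      ∑ n ∈ Finset.range (N + 1 + M), c n * exp (θ * I) ^ n := fun θ => by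
    have haz : exp (θ * I) ^ (N + 1) * a.eval (exp (θ * I)) =
        ∑ k ∈ Finset.range M, c (N + 1 + k) * exp (θ * I) ^ (N + 1 + k) := by
      rw [ha, Polynomial.eval_finsetSum, Finset.mul_sum]
      refine Finset.sum_congr rfl fun n _ => ?_
      simp only [Polynomial.eval_mul, Polynomial.eval_C, Polynomial.eval_pow, Polynomial.eval_X]
      ring
    rw [mul_add, hbz, Finset.sum_range_add _ (N + 1) M, haz]
    exact add_comm _ _
  simp only [← hbz, ← hpz, norm_mul, norm_pow, hz, one_pow, one_mul, RCLike.norm_conj]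
  exact h a b hb0

/-! ### Absolutely convergent power series on a circle -/

theorem norm_sub_rpow_le (x y : ℂ) {p : ℝ} (hp : 0 ≤ p) :
    ‖x - y‖ ^ p ≤ 2 ^ p * (‖x‖ ^ p + ‖y‖ ^ p) := by
  have h1 : ‖x - y‖ ≤ 2 * max ‖x‖ ‖y‖ := by
    linarith [norm_sub_le x y, le_max_left ‖x‖ ‖y‖, le_max_right ‖x‖ ‖y‖]
  have hx : 0 ≤ ‖x‖ ^ p := by positivity
  have hy : 0 ≤ ‖y‖ ^ p := by positivity
  calc ‖x - y‖ ^ p ≤ (2 * max ‖x‖ ‖y‖) ^ p := by gcongr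
    _ = 2 ^ p * (max ‖x‖ ‖y‖) ^ p := by rw [Real.mul_rpow (by norm_num) (by positivity)]
    _ ≤ _ := by
      gcongr
      rcases le_total ‖x‖ ‖y‖ with h | h
      · rw [max_eq_right h]; linarith
      · rw [max_eq_left h]; linarith

section circle

variable {c : ℕ → ℂ} {F : ℝ → ℂ}

theorem norm_circle_term (c : ℕ → ℂ) (n : ℕ) (θ : ℝ) : ‖c n * exp (θ * I) ^ n‖ = ‖c n‖ := by
  simp [norm_exp_ofReal_mul_I]

theorem circle_sum_continuous (hc : Summable fun n => ‖c n‖)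
    (hF : ∀ θ : ℝ, HasSum (fun n => c n * exp (θ * I) ^ n) (F θ)) : Continuous F := by
  have : F = fun θ : ℝ => ∑' n, c n * exp (θ * I) ^ n := funext fun θ => (hF θ).tsum_eq.symm
  rw [this]
  exact continuous_tsum (fun n => by fun_prop) hc fun n θ => (norm_circle_term c n θ).le

theorem norm_circle_partial_le (hc : Summable fun n => ‖c n‖) (N : ℕ) (θ : ℝ) :
    ‖∑ n ∈ Finset.range N, c n * exp (θ * I) ^ n‖ ≤ ∑' n, ‖c n‖ := by
  refine (norm_sum_le _ _).trans ?_
  simp only [norm_circle_term]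
  exact hc.sum_le_tsum _ fun _ _ => norm_nonneg _

theorem norm_circle_sum_le (hc : Summable fun n => ‖c n‖)
    (hF : ∀ θ : ℝ, HasSum (fun n => c n * exp (θ * I) ^ n) (F θ)) (θ : ℝ) :
    ‖F θ‖ ≤ ∑' n, ‖c n‖ :=
  le_of_tendsto' (hF θ).tendsto_sum_nat.norm fun N => norm_circle_partial_le hc N θ

theorem tendsto_circle_norm (hc : Summable fun n => ‖c n‖)
    (hF : ∀ θ : ℝ, HasSum (fun n => c n * exp (θ * I) ^ n) (F θ)) {p : ℝ} (hp : 0 < p) :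
    Filter.Tendsto (fun N => ∫ θ in (-Real.pi)..Real.pi,
      ‖∑ n ∈ Finset.range N, c n * exp (θ * I) ^ n‖ ^ p) Filter.atTop
      (nhds (∫ θ in (-Real.pi)..Real.pi, ‖F θ‖ ^ p)) := by
  refine intervalIntegral.tendsto_integral_filter_of_dominated_convergence
    (fun _ => (∑' n, ‖c n‖) ^ p) (Filter.Eventually.of_forall fun N => ?_)
    (Filter.Eventually.of_forall fun N => Filter.Eventually.of_forall fun θ _ => ?_)
    intervalIntegrable_const (Filter.Eventually.of_forall fun θ _ => ?_)
  · exact ((show Continuous fun θ : ℝ => ‖∑ n ∈ Finset.range N, c n * exp (θ * I) ^ n‖ by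
      fun_prop).rpow_const fun _ => Or.inr hp.le).aestronglyMeasurable
  · rw [Real.norm_of_nonneg (by positivity)]
    exact Real.rpow_le_rpow (norm_nonneg _) (norm_circle_partial_le hc N θ) hp.le
  · exact (hF θ).tendsto_sum_nat.norm.rpow_const (Or.inr hp.le)

theorem tendsto_circle_error (hc : Summable fun n => ‖c n‖)
    (hF : ∀ θ : ℝ, HasSum (fun n => c n * exp (θ * I) ^ n) (F θ)) {p : ℝ} (hp : 0 < p) :
    Filter.Tendsto (fun N => ∫ θ in (-Real.pi)..Real.pi,
      ‖(∑ n ∈ Finset.range (N + 1), c n * exp (θ * I) ^ n) - F θ‖ ^ p) Filter.atTop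
      (nhds 0) := by
  have cF := circle_sum_continuous hc hF
  have h0 : (0 : ℝ) = ∫ θ in (-Real.pi)..Real.pi, (0 : ℝ) := by simp
  rw [h0]
  refine intervalIntegral.tendsto_integral_filter_of_dominated_convergence
    (fun _ => (2 * ∑' n, ‖c n‖) ^ p) (Filter.Eventually.of_forall fun N => ?_)
    (Filter.Eventually.of_forall fun N => Filter.Eventually.of_forall fun θ _ => ?_)
    intervalIntegrable_const (Filter.Eventually.of_forall fun θ _ => ?_)
  · exact ((show Continuous fun θ : ℝ =>
        ‖(∑ n ∈ Finset.range (N + 1), c n * exp (θ * I) ^ n) - F θ‖ by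
      fun_prop).rpow_const fun _ => Or.inr hp.le).aestronglyMeasurable
  · rw [Real.norm_of_nonneg (by positivity)]
    refine Real.rpow_le_rpow (norm_nonneg _) ((norm_sub_le _ _).trans ?_) hp.le
    linarith [norm_circle_partial_le hc (N + 1) θ, norm_circle_sum_le hc hF θ]
  · have h1 := (((hF θ).tendsto_sum_nat.comp (Filter.tendsto_add_atTop_nat 1)).sub_const
      (F θ)).norm.rpow_const (p := p) (Or.inr hp.le)
    simpa [hp.ne'] using h1

/-- The uniform bound passes from polynomials to absolutely convergent series by letting the degree
of the full polynomial tend to infinity. -/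
theorem exists_circle_error_bound {p : ℝ} (hp : 1 < p) :
    ∃ C : ℝ, 0 < C ∧ ∀ (c : ℕ → ℂ) (F : ℝ → ℂ), (Summable fun n => ‖c n‖) →
      (∀ θ : ℝ, HasSum (fun n => c n * exp (θ * I) ^ n) (F θ)) → ∀ N : ℕ,
      ∫ θ in (-Real.pi)..Real.pi,
        ‖(∑ n ∈ Finset.range (N + 1), c n * exp (θ * I) ^ n) - F θ‖ ^ p ≤
      C * ∫ θ in (-Real.pi)..Real.pi, ‖F θ‖ ^ p := by
  obtain ⟨C, hC, h⟩ := exists_partial_sum_bound hp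
  refine ⟨2 ^ p * (C + 1), by positivity, fun c F hc hF N => ?_⟩
  have hp0 : 0 < p := by linarith
  have cF := circle_sum_continuous hc hF
  have h1 : ∫ θ in (-Real.pi)..Real.pi,
      ‖∑ n ∈ Finset.range (N + 1), c n * exp (θ * I) ^ n‖ ^ p ≤
      C * ∫ θ in (-Real.pi)..Real.pi, ‖F θ‖ ^ p := by
    refine ge_of_tendsto' (((tendsto_circle_norm hc hF hp0).comp
      (Filter.tendsto_add_atTop_nat (N + 1))).const_mul C) fun M => ?_
    have := h c N M
    rwa [add_comm (N + 1) M] at this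
  have i1 : IntervalIntegrable (fun θ : ℝ =>
      ‖∑ n ∈ Finset.range (N + 1), c n * exp (θ * I) ^ n‖ ^ p) volume (-Real.pi) Real.pi :=
    ((show Continuous fun θ : ℝ => ‖∑ n ∈ Finset.range (N + 1), c n * exp (θ * I) ^ n‖ by
      fun_prop).rpow_const fun _ => Or.inr hp0.le).intervalIntegrable _ _
  have i2 : IntervalIntegrable (fun θ : ℝ => ‖F θ‖ ^ p) volume (-Real.pi) Real.pi :=
    (cF.norm.rpow_const fun _ => Or.inr hp0.le).intervalIntegrable _ _
  calc _ ≤ ∫ θ in (-Real.pi)..Real.pi,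
        2 ^ p * (‖∑ n ∈ Finset.range (N + 1), c n * exp (θ * I) ^ n‖ ^ p + ‖F θ‖ ^ p) := by
        refine intervalIntegral.integral_mono_on (by linarith [Real.pi_pos]) ?_
          ((i1.add i2).const_mul _) fun θ _ => norm_sub_rpow_le _ _ hp0.le
        exact ((show Continuous fun θ : ℝ =>
            ‖(∑ n ∈ Finset.range (N + 1), c n * exp (θ * I) ^ n) - F θ‖ by
          fun_prop).rpow_const fun _ => Or.inr hp0.le).intervalIntegrable _ _
    _ ≤ _ := by
        rw [intervalIntegral.integral_const_mul, intervalIntegral.integral_add i1 i2, mul_assoc]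
        gcongr
        linarith

end circle

/-! ### Polar coordinates and the weighted norm -/

theorem lintegral_polar (k : ℂ → ENNReal) (hk : Measurable k) :
    ∫⁻ z, k z = ∫⁻ r in Set.Ioi (0 : ℝ), ∫⁻ θ in Set.Ioo (-Real.pi) Real.pi,
      ENNReal.ofReal r * k (r * exp (θ * I)) := by
  rw [← Complex.lintegral_comp_polarCoord_symm, polarCoord_target, Measure.volume_eq_prod,
    ← Measure.prod_restrict, lintegral_prod]
  · simp only [Complex.polarCoord_symm_apply, exp_mul_I, smul_eq_mul, ofReal_cos, ofReal_sin]
  · refine Measurable.aemeasurable ?_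
    simp only [Complex.polarCoord_symm_apply, smul_eq_mul]
    fun_prop

theorem measurable_polar_slice (k : ℂ → ENNReal) (hk : Measurable k) :
    Measurable fun r : ℝ => ∫⁻ θ in Set.Ioo (-Real.pi) Real.pi,
      ENNReal.ofReal r * k (r * exp (θ * I)) := by
  have : Measurable fun x : ℝ × ℝ => ENNReal.ofReal x.1 * k (x.1 * exp (x.2 * I)) := by fun_prop
  exact this.lintegral_prod_right'

theorem measurable_indicator_weight {lam : ℝ → ℝ} (hcont : ContinuousOn lam (Set.Ico 0 1)) {p : ℝ}
    (hp : 0 ≤ p) {g : ℂ → ℂ} (hg : ContinuousOn g (Metric.ball 0 1)) :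
    Measurable ((Metric.ball (0 : ℂ) 1).indicator
      fun z => ENNReal.ofReal (‖g z‖ ^ p * lam ‖z‖)) := by
  have h1 : ContinuousOn (fun z => ENNReal.ofReal (‖g z‖ ^ p * lam ‖z‖)) (Metric.ball 0 1) := by
    refine ENNReal.continuous_ofReal.comp_continuousOn ?_
    refine (hg.norm.rpow_const fun _ _ => Or.inr hp).mul
      (hcont.comp continuous_norm.continuousOn fun z hz => ⟨norm_nonneg z, ?_⟩)
    simpa using hz
  classical
  have := h1.measurable_piecewise (continuousOn_const (c := 0)) Metric.isOpen_ball.measurableSet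
  rwa [show (fun _ : ℂ => (0 : ENNReal)) = 0 from rfl, Set.piecewise_eq_indicator] at this

/-- On the circle of radius `r < 1` the radial weight is constant, so the slice of the weighted
integral is `r λ(r)` times the unweighted `p`-th power mean. -/
theorem polar_slice_eq {lam : ℝ → ℝ} {p : ℝ} {g : ℂ → ℂ} {r : ℝ} (hr : r ∈ Set.Ioo (0 : ℝ) 1)
    (hp : 0 ≤ p)
    (hg : Continuous fun θ : ℝ => g (r * exp (θ * I))) :
    ∫⁻ θ in Set.Ioo (-Real.pi) Real.pi, ENNReal.ofReal r * (Metric.ball (0 : ℂ) 1).indicator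
      (fun z => ENNReal.ofReal (‖g z‖ ^ p * lam ‖z‖)) (r * exp (θ * I)) =
    ENNReal.ofReal r * ENNReal.ofReal (lam r) *
      ENNReal.ofReal (∫ θ in (-Real.pi)..Real.pi, ‖g (r * exp (θ * I))‖ ^ p) := by
  have hn : ∀ θ : ℝ, ‖(r : ℂ) * exp (θ * I)‖ = r := fun θ => by
    rw [norm_mul, norm_exp_ofReal_mul_I, mul_one, norm_real, Real.norm_of_nonneg hr.1.le]
  have hc : Continuous fun θ : ℝ => ‖g (r * exp (θ * I))‖ ^ p :=
    hg.norm.rpow_const fun _ => Or.inr hp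
  have e1 : ∀ θ : ℝ, ENNReal.ofReal r * (Metric.ball (0 : ℂ) 1).indicator
      (fun z => ENNReal.ofReal (‖g z‖ ^ p * lam ‖z‖)) (r * exp (θ * I)) =
      ENNReal.ofReal r * ENNReal.ofReal (lam r) *
        ENNReal.ofReal (‖g (r * exp (θ * I))‖ ^ p) := fun θ => by
    rw [Set.indicator_of_mem (by rw [mem_ball_zero_iff, hn]; exact hr.2), hn,
      ENNReal.ofReal_mul (by positivity)]
    ring
  simp only [e1]
  rw [lintegral_const_mul _ hc.measurable.ennreal_ofReal, intervalIntegral.integral_of_le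
    (by linarith [Real.pi_pos]), integral_Ioc_eq_integral_Ioo,
    ofReal_integral_eq_lintegral_ofReal]
  · exact (hc.integrableOn_Icc (a := -Real.pi) (b := Real.pi)).mono_set Set.Ioo_subset_Icc_self
  · exact Filter.Eventually.of_forall fun θ => by positivity

theorem polar_slice_zero {k : ℂ → ENNReal} {r : ℝ} (hr : 1 ≤ r) :
    ∫⁻ θ in Set.Ioo (-Real.pi) Real.pi, ENNReal.ofReal r * (Metric.ball (0 : ℂ) 1).indicator
      k (r * exp (θ * I)) = 0 := by
  have : ∀ θ : ℝ, (Metric.ball (0 : ℂ) 1).indicator k (r * exp (θ * I)) = 0 := fun θ => by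
    refine Set.indicator_of_notMem ?_ _
    rw [mem_ball_zero_iff, norm_mul, norm_exp_ofReal_mul_I, mul_one, norm_real,
      Real.norm_of_nonneg (by linarith)]
    linarith
  simp [this]

/-- For an integrable radial weight `λ`, `1 < p < ∞`, and a holomorphic
`f(z) = ∑ f_n zⁿ` in the weighted `L^p` space, the Taylor polynomials `S_N f` converge to `f`
in the weighted `L^p` norm. -/
theorem stmt3 (lam : ℝ → ℝ) (hcont : ContinuousOn lam (Set.Ico 0 1))
    (hpos : ∀ r ∈ Set.Ico (0:ℝ) 1, 0 < lam r)
    (hint : MeasureTheory.IntegrableOn (fun r : ℝ => r * lam r) (Set.Ioo (0:ℝ) 1))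
    (p : ℝ) (hp : 1 < p)
    (f : ℂ → ℂ) (hf : DifferentiableOn ℂ f (Metric.ball 0 1))
    (c : ℕ → ℂ)
    (hc : ∀ z ∈ Metric.ball (0:ℂ) 1, HasSum (fun n : ℕ => c n * z ^ n) (f z))
    (hfLp : (∫⁻ z in Metric.ball (0:ℂ) 1,
        ENNReal.ofReal (‖f z‖ ^ p * lam ‖z‖)) < ⊤) :
    Filter.Tendsto (fun N : ℕ =>
      ∫⁻ z in Metric.ball (0:ℂ) 1,
        ENNReal.ofReal (‖(∑ n ∈ Finset.range (N + 1), c n * z ^ n) - f z‖ ^ p * lam ‖z‖))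
      Filter.atTop (nhds 0) := by
  have hp0 : 0 < p := by linarith
  obtain ⟨C, hC, hbound⟩ := exists_circle_error_bound hp
  have hcf : ContinuousOn f (Metric.ball 0 1) := hf.continuousOn
  set g : ℕ → ℂ → ℂ := fun N z => (∑ n ∈ Finset.range (N + 1), c n * z ^ n) - f z with hgdef
  have hcg : ∀ N, ContinuousOn (g N) (Metric.ball 0 1) := fun N =>
    (show Continuous fun z : ℂ => ∑ n ∈ Finset.range (N + 1), c n * z ^ n by
      fun_prop).continuousOn.sub hcf
  have hball : MeasurableSet (Metric.ball (0 : ℂ) 1) := Metric.isOpen_ball.measurableSet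
  have hpolar : ∀ h : ℂ → ℂ, ContinuousOn h (Metric.ball 0 1) →
      ∫⁻ z in Metric.ball (0 : ℂ) 1, ENNReal.ofReal (‖h z‖ ^ p * lam ‖z‖) =
      ∫⁻ r in Set.Ioi (0 : ℝ), ∫⁻ θ in Set.Ioo (-Real.pi) Real.pi,
        ENNReal.ofReal r * (Metric.ball (0 : ℂ) 1).indicator
          (fun z => ENNReal.ofReal (‖h z‖ ^ p * lam ‖z‖)) (r * exp (θ * I)) := fun h hh => by
    rw [← lintegral_indicator hball]
    exact lintegral_polar _ (measurable_indicator_weight hcont hp0.le hh)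
  -- On the circle of radius `r` the relevant Fourier series has coefficients `c n * r ^ n`,
  -- which are absolutely summable because power series converge absolutely inside the disc.
  have hmem : ∀ r ∈ Set.Ioo (0 : ℝ) 1, ∀ θ : ℝ, (r : ℂ) * exp (θ * I) ∈ Metric.ball (0 : ℂ) 1 :=
    fun r hr θ => by
      rw [mem_ball_zero_iff, norm_mul, norm_exp_ofReal_mul_I, mul_one, norm_real,
        Real.norm_of_nonneg hr.1.le]
      exact hr.2
  have hcirc : ∀ r ∈ Set.Ioo (0 : ℝ) 1, ∀ h : ℂ → ℂ, ContinuousOn h (Metric.ball 0 1) →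
      Continuous fun θ : ℝ => h (r * exp (θ * I)) := fun r hr h hh =>
    hh.comp_continuous (by fun_prop) (hmem r hr)
  have hsum : ∀ r ∈ Set.Ioo (0 : ℝ) 1, Summable fun n => ‖c n * (r : ℂ) ^ n‖ := fun r hr =>
    (hc r (by simpa using hmem r hr 0)).summable.norm
  have hhas : ∀ r ∈ Set.Ioo (0 : ℝ) 1, ∀ θ : ℝ,
      HasSum (fun n => c n * (r : ℂ) ^ n * exp (θ * I) ^ n) (f (r * exp (θ * I))) :=
    fun r hr θ => by
      simpa only [mul_pow, mul_assoc] using hc _ (hmem r hr θ)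
  have hgr : ∀ (N : ℕ) (r θ : ℝ), g N (r * exp (θ * I)) =
      (∑ n ∈ Finset.range (N + 1), c n * (r : ℂ) ^ n * exp (θ * I) ^ n) - f (r * exp (θ * I)) :=
    fun N r θ => by
      simp only [hgdef, mul_pow, mul_assoc]
  have hfin := hfLp
  rw [hpolar f hcf] at hfin
  change Filter.Tendsto (fun N : ℕ => ∫⁻ z in Metric.ball (0 : ℂ) 1,
      ENNReal.ofReal (‖g N z‖ ^ p * lam ‖z‖)) _ _
  simp only [fun N => hpolar (g N) (hcg N)]
  rw [← lintegral_zero (μ := (volume.restrict (Set.Ioi (0 : ℝ))))]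
  have hfm := measurable_polar_slice _ (measurable_indicator_weight hcont hp0.le hcf)
  refine tendsto_lintegral_of_dominated_convergence (fun r => ENNReal.ofReal C *
      ∫⁻ θ in Set.Ioo (-Real.pi) Real.pi, ENNReal.ofReal r * (Metric.ball (0 : ℂ) 1).indicator
        (fun z => ENNReal.ofReal (‖f z‖ ^ p * lam ‖z‖)) (r * exp (θ * I)))
    (fun N => measurable_polar_slice _ (measurable_indicator_weight hcont hp0.le (hcg N)))
    (fun N => ?_) ?_ ?_
  · filter_upwards [ae_restrict_mem measurableSet_Ioi] with r hr0
    rcases lt_or_ge r 1 with hr1 | hr1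
    · have hr : r ∈ Set.Ioo (0 : ℝ) 1 := ⟨hr0, hr1⟩
      rw [polar_slice_eq hr hp0.le (hcirc r hr _ (hcg N)),
        polar_slice_eq hr hp0.le (hcirc r hr _ hcf), mul_left_comm, ← ENNReal.ofReal_mul hC.le]
      simp only [hgr]
      gcongr
      exact hbound _ _ (hsum r hr) (hhas r hr) N
    · simp only [polar_slice_zero hr1]
      exact zero_le
  · rw [lintegral_const_mul _ hfm]
    exact ENNReal.mul_ne_top ENNReal.ofReal_ne_top hfin.ne
  · filter_upwards [ae_restrict_mem measurableSet_Ioi] with r hr0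
    rcases lt_or_ge r 1 with hr1 | hr1
    · have hr : r ∈ Set.Ioo (0 : ℝ) 1 := ⟨hr0, hr1⟩
      simp only [fun N => polar_slice_eq (lam := lam) hr hp0.le (hcirc r hr _ (hcg N)), hgr]
      have h1 := ENNReal.tendsto_ofReal (tendsto_circle_error (hsum r hr) (hhas r hr) hp0)
      have h2 := ENNReal.Tendsto.const_mul (a := ENNReal.ofReal r * ENNReal.ofReal (lam r)) h1
        (Or.inr (ENNReal.mul_ne_top ENNReal.ofReal_ne_top ENNReal.ofReal_ne_top))
      simpa using h2
    · simp only [polar_slice_zero hr1]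
      exact tendsto_const_nhds
end

section
/- Let λ : [0,1) → (0,∞) be continuous with ∫₀¹ r λ(r) dr < ∞, and let 1 < p < ∞. Let f : 𝔻 → ℂ be holomorphic with ∫_𝔻 |f(z)|^p λ(|z|) dA(z) < ∞, and for 0 < ρ < 1 define the dilation f_ρ(z) = f(ρz). Then lim_{ρ→1⁻} ∫_𝔻 |f(z) − f_ρ(z)|^p λ(|z|) dA(z) = 0. -/
/-!
Dilation `f ↦ f_ρ` does not increase the weighted norm: the Poisson formula for `w ↦ f (w z)` at
`w = ρ` writes `f (ρ z)` as the average of `f (e^{iθ} z)` against a probability measure in `θ`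
independent of `z`, and the measure `λ(|z|) dA(z)` is rotation invariant, so Jensen's inequality and
Tonelli give `∫ |f_ρ|^p λ dA ≤ ∫ |f|^p λ dA` (`lintegral_dilation_le`).

Since `f_ρ → f` pointwise on the disc, Fatou's lemma applied to
`2^{p-1} (|f|^p + |f_ρ|^p) - |f - f_ρ|^p ≥ 0` together with this bound forces
`∫ |f - f_ρ|^p λ dA → 0` (`tendsto_lintegral_zero_of_le_of_lintegral_le`).
-/

open MeasureTheory Filter Set Topology Metric

/-- A dominated convergence principle with a moving majorant: if `d i → 0` and `b i → a` almost
everywhere, `d i ≤ C (a + b i)`, and `∫ b i ≤ ∫ a < ∞`, then `∫ d i → 0`. It is Fatou's lemma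
applied to `C (a + b i) - d i`, whose pointwise limit is `2 C a`. -/
lemma tendsto_lintegral_zero_of_le_of_lintegral_le {α ι : Type*} [MeasurableSpace α]
    {μ : Measure α} {u : Filter ι} [u.IsCountablyGenerated] [u.NeBot]
    {a : α → ENNReal} {b d : ι → α → ENNReal} {C : ENNReal} (hC : C ≠ ⊤)
    (ham : AEMeasurable a μ) (hbm : ∀ i, AEMeasurable (b i) μ) (hdm : ∀ i, AEMeasurable (d i) μ)
    (ha : ∫⁻ x, a x ∂μ ≠ ⊤) (hba : ∀ i, ∫⁻ x, b i x ∂μ ≤ ∫⁻ x, a x ∂μ)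
    (hd : ∀ i, ∀ᵐ x ∂μ, d i x ≤ C * (a x + b i x))
    (hb_lim : ∀ᵐ x ∂μ, Tendsto (fun i => b i x) u (𝓝 (a x)))
    (hd_lim : ∀ᵐ x ∂μ, Tendsto (fun i => d i x) u (𝓝 0)) :
    Tendsto (fun i => ∫⁻ x, d i x ∂μ) u (𝓝 0) := by
  set K : ENNReal := C * (∫⁻ x, a x ∂μ + ∫⁻ x, a x ∂μ) with hK
  have hKtop : K ≠ ⊤ := ENNReal.mul_ne_top hC (ENNReal.add_ne_top.2 ⟨ha, ha⟩)
  have hlow : K ≤ liminf (fun i => ∫⁻ x, (C * (a x + b i x) - d i x) ∂μ) u := by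
    calc K = ∫⁻ x, C * (a x + a x) ∂μ := by
            rw [lintegral_const_mul' _ _ hC, lintegral_add_left' ham]
      _ = ∫⁻ x, liminf (fun i => C * (a x + b i x) - d i x) u ∂μ := by
            refine lintegral_congr_ae ?_
            filter_upwards [hb_lim, hd_lim, ae_lt_top' ham ha] with x hbx hdx hax
            have h1 : Tendsto (fun i => C * (a x + b i x) - d i x) u
                (𝓝 (C * (a x + a x) - 0)) :=
              ENNReal.Tendsto.sub
                (ENNReal.Tendsto.const_mul (tendsto_const_nhds.add hbx) (Or.inr hC)) hdx
                (Or.inr ENNReal.zero_ne_top)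
            simpa using h1.liminf_eq.symm
      _ ≤ _ := lintegral_liminf_le' fun i =>
            ((ham.add (hbm i)).const_mul C).sub (hdm i)
  have hupp : ∀ i, ∫⁻ x, d i x ∂μ ≤ K - ∫⁻ x, (C * (a x + b i x) - d i x) ∂μ := by
    intro i
    have hsum : ∫⁻ x, (C * (a x + b i x) - d i x) ∂μ + ∫⁻ x, d i x ∂μ ≤ K := by
      rw [← lintegral_add_right' _ (hdm i)]
      calc ∫⁻ x, (C * (a x + b i x) - d i x + d i x) ∂μ = ∫⁻ x, C * (a x + b i x) ∂μ :=
            lintegral_congr_ae ((hd i).mono fun x hx => tsub_add_cancel_of_le hx)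
        _ = C * (∫⁻ x, a x ∂μ + ∫⁻ x, b i x ∂μ) := by
            rw [lintegral_const_mul' _ _ hC, lintegral_add_left' ham]
        _ ≤ K := mul_le_mul_right (add_le_add_right (hba i) _) C
    refine ENNReal.le_sub_of_add_le_left ?_ hsum
    exact ne_top_of_le_ne_top hKtop (le_self_add.trans hsum)
  refine tendsto_of_le_liminf_of_limsup_le bot_le ?_
  calc limsup (fun i => ∫⁻ x, d i x ∂μ) u
      ≤ limsup (fun i => K - ∫⁻ x, (C * (a x + b i x) - d i x) ∂μ) u :=
        limsup_le_limsup (Eventually.of_forall hupp)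
    _ = K - liminf (fun i => ∫⁻ x, (C * (a x + b i x) - d i x) ∂μ) u :=
        ENNReal.limsup_const_sub _ _ hKtop
    _ ≤ 0 := by rw [tsub_eq_zero_of_le hlow]

/-- The Poisson formula in probabilistic form: evaluation at `ρ ∈ (0,1)` is integration over the
unit circle against a probability measure, with Poisson kernel density in the angle. -/
lemma exists_poisson_measure {ρ : ℝ} (hρ : ρ ∈ Ioo (0 : ℝ) 1) :
    ∃ ν : Measure ℝ, IsProbabilityMeasure ν ∧ ∀ g : ℂ → ℂ, DiffContOnCl ℂ g (ball 0 1) →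
      ∫ θ, g (circleMap 0 1 θ) ∂ν = g ρ := by
  have hρb : (ρ : ℂ) ∈ ball (0 : ℂ) 1 := by simp [abs_of_pos hρ.1, hρ.2]
  set k : ℝ → ℝ := fun θ => (2 * Real.pi)⁻¹ * poissonKernel 0 ρ (circleMap 0 1 θ) with hk
  have hk0 : ∀ θ, 0 ≤ k θ := by
    intro θ
    have h1 : ρ ^ 2 ≤ 1 := by nlinarith [hρ.1, hρ.2]
    simp only [hk, poissonKernel_def, sub_zero, norm_circleMap_zero, Complex.norm_real,
      Real.norm_eq_abs, sq_abs]
    have h2 : 0 ≤ (1 : ℝ) ^ 2 - ρ ^ 2 := by linarith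
    positivity
  have hkm : Measurable k := by
    simp only [hk, poissonKernel_def]
    have : Measurable (circleMap 0 1) := (continuous_circleMap 0 1).measurable
    fun_prop
  set ν : Measure ℝ := (volume.restrict (Ioc 0 (2 * Real.pi))).withDensity
    (fun θ => ENNReal.ofReal (k θ)) with hν
  have key : ∀ g : ℂ → ℂ, DiffContOnCl ℂ g (ball 0 1) →
      ∫ θ, g (circleMap 0 1 θ) ∂ν = g ρ := by
    intro g hg
    rw [hν, integral_withDensity_eq_integral_toReal_smul hkm.ennreal_ofReal
      (ae_of_all _ fun _ => ENNReal.ofReal_lt_top), ← hg.circleAverage_poissonKernel_smul hρb,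
      Real.circleAverage_def, intervalIntegral.integral_of_le (by positivity), ← integral_smul]
    refine integral_congr_ae (ae_of_all _ fun θ => ?_)
    simp only [ENNReal.toReal_ofReal (hk0 θ), Pi.smul_apply', smul_smul]
    rfl
  refine ⟨ν, ⟨?_⟩, key⟩
  have h1 := key (fun _ => 1) diffContOnCl_const
  rw [integral_const] at h1
  have h2 : ν.real univ = 1 := by
    have := congrArg Complex.re h1
    simpa using this
  rw [Measure.real, ENNReal.toReal_eq_one_iff] at h2
  exact h2

/-- Jensen's inequality for `x ↦ x ^ p` and complex-valued functions on a probability space. -/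
lemma ofReal_norm_integral_rpow_le {ν : Measure ℝ} [IsProbabilityMeasure ν] {h : ℝ → ℂ}
    (hh : AEStronglyMeasurable h ν) {p : ℝ} (hp : 1 ≤ p) :
    ENNReal.ofReal (‖∫ θ, h θ ∂ν‖ ^ p) ≤ ∫⁻ θ, ENNReal.ofReal (‖h θ‖ ^ p) ∂ν := by
  have hp0 : 0 < p := by linarith
  have e : ∀ z : ℂ, ENNReal.ofReal (‖z‖ ^ p) = ‖z‖ₑ ^ p := fun z => by
    rw [← ENNReal.ofReal_rpow_of_nonneg (norm_nonneg z) hp0.le, ofReal_norm]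
  simp_rw [e]
  have h1 := eLpNorm'_le_eLpNorm'_of_exponent_le one_pos hp ν hh
  rw [lintegral_rpow_enorm_eq_rpow_eLpNorm' hp0]
  refine ENNReal.rpow_le_rpow ((enorm_integral_le_lintegral_enorm h).trans ?_) hp0.le
  simpa [eLpNorm'] using h1

/-- Dilation is a contraction for a rotation-invariant weighted `L^p` norm: by the Poisson formula
`f (ρ z)` is an average of the values `f (e^{iθ} z)`, so Jensen's inequality, Tonelli and the
rotation invariance of `λ(|z|) dA(z)` give the bound. -/
lemma lintegral_dilation_le {lam : ℝ → ℝ} (hcont : ContinuousOn lam (Ico 0 1))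
    (hpos : ∀ r ∈ Ico (0:ℝ) 1, 0 < lam r) {p : ℝ} (hp : 1 ≤ p)
    {f : ℂ → ℂ} (hf : DifferentiableOn ℂ f (ball 0 1)) {ρ : ℝ} (hρ : ρ ∈ Ioo (0 : ℝ) 1) :
    ∫⁻ z in ball (0:ℂ) 1, ENNReal.ofReal (‖f (ρ * z)‖ ^ p * lam ‖z‖) ≤
      ∫⁻ z in ball (0:ℂ) 1, ENNReal.ofReal (‖f z‖ ^ p * lam ‖z‖) := by
  have hp0 : 0 < p := by linarith
  obtain ⟨ν, hν, hP⟩ := exists_poisson_measure hρ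
  have hlam : ContinuousOn (fun z : ℂ => lam ‖z‖) (ball 0 1) :=
    hcont.comp continuous_norm.continuousOn fun z hz => ⟨norm_nonneg z, by simpa using hz⟩
  -- the integrand, extended by zero so as to be globally measurable
  set G : ℂ → ENNReal := (ball (0:ℂ) 1).indicator
    (fun z => ENNReal.ofReal (‖f z‖ ^ p * lam ‖z‖)) with hG
  have hGm : Measurable G := by
    have hc : ContinuousOn (fun z => ENNReal.ofReal (‖f z‖ ^ p * lam ‖z‖)) (ball (0:ℂ) 1) :=
      ENNReal.continuous_ofReal.comp_continuousOn
        ((hf.continuousOn.norm.rpow_const fun _ _ => Or.inr hp0.le).mul hlam)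
    classical
    rw [hG, ← piecewise_eq_indicator]
    exact hc.measurable_piecewise continuousOn_const measurableSet_ball
  have hrot : ∀ θ : ℝ, ∫⁻ z, G (circleMap 0 1 θ * z) = ∫⁻ z, G z := by
    intro θ
    have := (rotation (Circle.exp θ)).measurePreserving.lintegral_comp hGm
    simpa [circleMap, rotation_apply] using this
  have hpt : ∀ z ∈ ball (0:ℂ) 1, ENNReal.ofReal (‖f (ρ * z)‖ ^ p * lam ‖z‖) ≤
      ∫⁻ θ, G (circleMap 0 1 θ * z) ∂ν := by
    intro z hz
    have hz1 : ‖z‖ < 1 := by simpa using hz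
    have hl : 0 ≤ lam ‖z‖ := (hpos _ ⟨norm_nonneg z, hz1⟩).le
    have hmaps : MapsTo (fun w => w * z) (closedBall (0:ℂ) 1) (ball 0 1) := by
      intro w hw
      have hw1 : ‖w‖ ≤ 1 := by simpa using hw
      have : ‖w * z‖ < 1 := by rw [norm_mul]; nlinarith [norm_nonneg z]
      simpa using this
    have hd : DifferentiableOn ℂ (fun w => f (w * z)) (closedBall 0 1) :=
      hf.comp (differentiable_id.mul_const z).differentiableOn hmaps
    have hcirc : ∀ θ, circleMap 0 1 θ ∈ closedBall (0:ℂ) 1 := fun θ => by simp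
    have hdc : DiffContOnCl ℂ (fun w => f (w * z)) (ball 0 1) := by
      apply DifferentiableOn.diffContOnCl
      rwa [closure_ball (0:ℂ) one_ne_zero]
    have hcc : Continuous fun θ => f (circleMap 0 1 θ * z) :=
      hd.continuousOn.comp_continuous (continuous_circleMap 0 1) hcirc
    calc ENNReal.ofReal (‖f (ρ * z)‖ ^ p * lam ‖z‖)
        = ENNReal.ofReal (‖∫ θ, f (circleMap 0 1 θ * z) ∂ν‖ ^ p) * ENNReal.ofReal (lam ‖z‖) := by
          rw [hP _ hdc, ENNReal.ofReal_mul (by positivity)]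
      _ ≤ (∫⁻ θ, ENNReal.ofReal (‖f (circleMap 0 1 θ * z)‖ ^ p) ∂ν) *
            ENNReal.ofReal (lam ‖z‖) := by
          gcongr
          exact ofReal_norm_integral_rpow_le hcc.aestronglyMeasurable hp
      _ = ∫⁻ θ, G (circleMap 0 1 θ * z) ∂ν := by
          rw [← lintegral_mul_const' _ _ ENNReal.ofReal_ne_top]
          refine lintegral_congr fun θ => ?_
          rw [hG, indicator_of_mem (hmaps (hcirc θ)), ENNReal.ofReal_mul (by positivity)]
          simp
  calc ∫⁻ z in ball (0:ℂ) 1, ENNReal.ofReal (‖f (ρ * z)‖ ^ p * lam ‖z‖)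
      ≤ ∫⁻ z in ball (0:ℂ) 1, ∫⁻ θ, G (circleMap 0 1 θ * z) ∂ν :=
        setLIntegral_mono' measurableSet_ball hpt
    _ ≤ ∫⁻ z, ∫⁻ θ, G (circleMap 0 1 θ * z) ∂ν := setLIntegral_le_lintegral _ _
    _ = ∫⁻ θ, (∫⁻ z, G (circleMap 0 1 θ * z)) ∂ν := by
        refine lintegral_lintegral_swap (Measurable.aemeasurable ?_)
        exact hGm.comp (((continuous_circleMap 0 1).comp continuous_snd).mul
          continuous_fst).measurable
    _ = ∫⁻ z, G z := by simp [hrot]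
    _ = _ := lintegral_indicator measurableSet_ball _


/-- For an integrable radial weight `λ`, `1 < p < ∞`, and a holomorphic `f` in
the weighted `L^p` space, the dilations `f_ρ(z) = f(ρz)` converge to `f` in the weighted
`L^p` norm as `ρ → 1⁻`. -/
theorem stmt4 (lam : ℝ → ℝ) (hcont : ContinuousOn lam (Set.Ico 0 1))
    (hpos : ∀ r ∈ Set.Ico (0:ℝ) 1, 0 < lam r)
    (hint : MeasureTheory.IntegrableOn (fun r : ℝ => r * lam r) (Set.Ioo (0:ℝ) 1))
    (p : ℝ) (hp : 1 < p)
    (f : ℂ → ℂ) (hf : DifferentiableOn ℂ f (Metric.ball 0 1))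
    (hfLp : (∫⁻ z in Metric.ball (0:ℂ) 1,
        ENNReal.ofReal (‖f z‖ ^ p * lam ‖z‖)) < ⊤) :
    Filter.Tendsto (fun ρ : ℝ =>
      ∫⁻ z in Metric.ball (0:ℂ) 1,
        ENNReal.ofReal (‖f z - f ((ρ : ℂ) * z)‖ ^ p * lam ‖z‖))
      (nhdsWithin 1 (Set.Ioo 0 1)) (nhds 0) := by
  have hp0 : 0 < p := by linarith
  have hlam : ContinuousOn (fun z : ℂ => lam ‖z‖) (ball 0 1) :=
    hcont.comp continuous_norm.continuousOn fun z hz => ⟨norm_nonneg z, by simpa using hz⟩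
  have hmaps : ∀ ρ ∈ Ioo (0:ℝ) 1, MapsTo (fun z : ℂ => (ρ : ℂ) * z) (ball 0 1) (ball 0 1) := by
    intro ρ hρ z hz
    have hz1 : ‖z‖ < 1 := by simpa using hz
    have : ‖(ρ : ℂ) * z‖ < 1 := by
      rw [norm_mul, Complex.norm_real, Real.norm_eq_abs, abs_of_pos hρ.1]
      nlinarith [norm_nonneg z, hρ.1, hρ.2]
    simpa using this
  have hfρ : ∀ ρ ∈ Ioo (0:ℝ) 1, ContinuousOn (fun z : ℂ => f ((ρ : ℂ) * z)) (ball 0 1) :=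
    fun ρ hρ => hf.continuousOn.comp (continuous_const_mul _).continuousOn (hmaps ρ hρ)
  have hmeas : ∀ g : ℂ → ℂ, ContinuousOn g (ball 0 1) →
      AEMeasurable (fun z => ENNReal.ofReal (‖g z‖ ^ p * lam ‖z‖))
        (volume.restrict (ball (0:ℂ) 1)) := fun g hg =>
    (ENNReal.continuous_ofReal.comp_continuousOn
      ((hg.norm.rpow_const fun _ _ => Or.inr hp0.le).mul hlam)).aemeasurable measurableSet_ball
  -- The filter is moved to the subtype, where every dilation is continuous on the disc.
  have hmap : nhdsWithin (1:ℝ) (Ioo 0 1) =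
      map ((↑) : Ioo (0:ℝ) 1 → ℝ) (comap (↑) (𝓝 (1:ℝ))) := by
    rw [map_comap_setCoe_val]; rfl
  have hne : NeBot (nhdsWithin (1:ℝ) (Ioo 0 1)) := by
    rw [nhdsWithin_Ioo_eq_nhdsLT one_pos]; infer_instance
  rw [hmap] at hne ⊢
  have : NeBot (comap ((↑) : Ioo (0:ℝ) 1 → ℝ) (𝓝 (1:ℝ))) := map_neBot_iff _ |>.1 hne
  rw [tendsto_map'_iff]
  have hlim : ∀ z ∈ ball (0:ℂ) 1, Tendsto (fun ρ : Ioo (0:ℝ) 1 => f (((ρ : ℝ) : ℂ) * z))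
      (comap (↑) (𝓝 (1:ℝ))) (𝓝 (f z)) := by
    intro z hz
    have h1 : ContinuousAt f z := hf.continuousOn.continuousAt (isOpen_ball.mem_nhds hz)
    have h2 : Tendsto (fun r : ℝ => (r : ℂ) * z) (𝓝 1) (𝓝 z) := by
      have : Continuous fun r : ℝ => (r : ℂ) * z := by fun_prop
      simpa using this.tendsto 1
    exact (h1.tendsto.comp h2).comp tendsto_comap
  have hwlim : ∀ z (g : Ioo (0:ℝ) 1 → ℂ) (w : ℂ), Tendsto g (comap (↑) (𝓝 (1:ℝ))) (𝓝 w) →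
      Tendsto (fun ρ => ENNReal.ofReal (‖g ρ‖ ^ p * lam ‖z‖)) (comap (↑) (𝓝 (1:ℝ)))
        (𝓝 (ENNReal.ofReal (‖w‖ ^ p * lam ‖(z : ℂ)‖))) := fun z g w hg =>
    ENNReal.tendsto_ofReal ((hg.norm.rpow_const (Or.inr hp0.le)).mul_const _)
  refine tendsto_lintegral_zero_of_le_of_lintegral_le
    (a := fun z => ENNReal.ofReal (‖f z‖ ^ p * lam ‖z‖))
    (b := fun (ρ : Ioo (0:ℝ) 1) z => ENNReal.ofReal (‖f (((ρ : ℝ) : ℂ) * z)‖ ^ p * lam ‖z‖))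
    (C := ENNReal.ofReal (2 ^ (p - 1))) ENNReal.ofReal_ne_top (hmeas f hf.continuousOn)
    (fun ρ => hmeas _ (hfρ ρ ρ.2)) (fun ρ => hmeas _ (hf.continuousOn.sub (hfρ ρ ρ.2)))
    hfLp.ne (fun ρ => lintegral_dilation_le hcont hpos hp.le hf ρ.2) ?_ ?_ ?_
  · intro ρ
    filter_upwards [ae_restrict_mem measurableSet_ball] with z hz
    have hl : 0 ≤ lam ‖z‖ := (hpos _ ⟨norm_nonneg z, by simpa using hz⟩).le
    rw [← ENNReal.ofReal_add (by positivity) (by positivity),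
      ← ENNReal.ofReal_mul (by positivity)]
    refine ENNReal.ofReal_le_ofReal ?_
    have h1 : ‖f z - f (((ρ : ℝ) : ℂ) * z)‖ ^ p ≤
        2 ^ (p - 1) * (‖f z‖ ^ p + ‖f (((ρ : ℝ) : ℂ) * z)‖ ^ p) :=
      (Real.rpow_le_rpow (norm_nonneg _) (norm_sub_le _ _) hp0.le).trans
        (mod_cast NNReal.rpow_add_le_mul_rpow_add_rpow ‖f z‖₊ ‖f (((ρ : ℝ) : ℂ) * z)‖₊ hp.le)
    calc _ ≤ 2 ^ (p - 1) * (‖f z‖ ^ p + ‖f (((ρ : ℝ) : ℂ) * z)‖ ^ p) * lam ‖z‖ := by gcongr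
      _ = _ := by ring
  · filter_upwards [ae_restrict_mem measurableSet_ball] with z hz
    exact hwlim z _ _ (hlim z hz)
  · filter_upwards [ae_restrict_mem measurableSet_ball] with z hz
    have h1 := hwlim z _ _ ((tendsto_const_nhds (x := f z)).sub (hlim z hz))
    simpa [Real.zero_rpow hp0.ne'] using h1
end

section
/- Let λ : [0,1) → (0,∞) be continuous with ∫₀¹ r λ(r) dr < ∞, and let 1 < p < ∞. Let f : 𝔻 → ℂ be holomorphic with ∫_𝔻 |f(z)|^p λ(|z|) dA(z) < ∞. Then for every ε > 0 there exists a complex polynomial Q such that ∫_𝔻 |f(z) − Q(z)|^p λ(|z|) dA(z) < ε. -/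
/-!
Write `f_ρ z = f (ρ z)` for `0 < ρ < 1`, and let `ν` be the measure `λ(|z|) dA` on the disc, which
is finite (polar coordinates) and rotation invariant.

By the Poisson formula on the unit circle, `f (ρ z)` is an average of the rotated values
`f (e^{it} z)` against a probability density in `t`. Jensen's inequality and rotation invariance
of `ν` then give `∫ |f_ρ|^p dν ≤ ∫ |f|^p dν` (`lintegral_dilate_le`). Since `f_ρ → f` pointwise
as `ρ → 1`, Fatou's lemma applied to `2^{p-1} (|f|^p + |f_ρ|^p) - |f - f_ρ|^p ≥ 0` shows that
`∫ |f - f_ρ|^p dν` becomes arbitrarily small (`exists_lintegral_sub_lt`).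
For fixed `ρ`, the Taylor polynomials of `f_ρ` converge to it uniformly on the disc
(`exists_polynomial_near_dilate`), hence in `L^p(ν)` because `ν` is finite.
-/
open MeasureTheory Set Filter Topology Metric

/-- The measure `λ(|z|) dA(z)` on the unit disc, regarded as a measure on `ℂ` that vanishes outside
the disc. -/
noncomputable def radialMeasure (lam : ℝ → ℝ) : Measure ℂ :=
  volume.withDensity ((ball (0 : ℂ) 1).indicator fun z => ENNReal.ofReal (lam ‖z‖))

lemma measurable_density {lam : ℝ → ℝ} (hcont : ContinuousOn lam (Ico 0 1)) :
    Measurable ((ball (0 : ℂ) 1).indicator fun z => ENNReal.ofReal (lam ‖z‖)) := by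
  classical
  rw [← piecewise_eq_indicator]
  refine ContinuousOn.measurable_piecewise ?_ continuousOn_const measurableSet_ball
  refine ENNReal.continuous_ofReal.comp_continuousOn ?_
  exact hcont.comp continuous_norm.continuousOn fun z hz => ⟨norm_nonneg z, by simpa using hz⟩

lemma measurable_indicator_ball {f : ℂ → ℂ} (hf : DifferentiableOn ℂ f (ball 0 1)) :
    Measurable ((ball (0 : ℂ) 1).indicator f) := by
  classical
  rw [← piecewise_eq_indicator]
  exact hf.continuousOn.measurable_piecewise continuousOn_const measurableSet_ball

lemma ae_mem_ball {lam : ℝ → ℝ} (hcont : ContinuousOn lam (Ico 0 1)) :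
    ∀ᵐ z ∂radialMeasure lam, z ∈ ball (0 : ℂ) 1 := by
  rw [radialMeasure, ae_withDensity_iff (measurable_density hcont)]
  exact ae_of_all _ fun z hz => by_contra fun h => hz (indicator_of_notMem h _)

/-- The weighted integral over the disc as an integral against `radialMeasure`. The zero extension
of `g` stands in for `g`, whose values outside the disc may fail to be measurable. -/
lemma lintegral_radialMeasure {lam : ℝ → ℝ} (hcont : ContinuousOn lam (Ico 0 1))
    {p : ℝ} (hp : 0 ≤ p) {g : ℂ → ℂ} (hg : Measurable ((ball (0 : ℂ) 1).indicator g)) :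
    ∫⁻ z in ball (0 : ℂ) 1, ENNReal.ofReal (‖g z‖ ^ p * lam ‖z‖)
      = ∫⁻ z, ‖(ball (0 : ℂ) 1).indicator g z‖ₑ ^ p ∂radialMeasure lam := by
  rw [radialMeasure, lintegral_withDensity_eq_lintegral_mul _ (measurable_density hcont)
    (hg.enorm.pow_const p), ← lintegral_indicator measurableSet_ball]
  refine lintegral_congr fun z => ?_
  by_cases hz : z ∈ ball (0 : ℂ) 1
  · simp only [indicator_of_mem hz, Pi.mul_apply]
    rw [ENNReal.ofReal_mul (by positivity), mul_comm,
      ← ENNReal.ofReal_rpow_of_nonneg (norm_nonneg _) hp, ofReal_norm]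
  · simp [indicator_of_notMem hz]

lemma isFiniteMeasure_radialMeasure {lam : ℝ → ℝ}
    (hint : IntegrableOn (fun r : ℝ => r * lam r) (Ioo (0 : ℝ) 1)) :
    IsFiniteMeasure (radialMeasure lam) := by
  refine isFiniteMeasure_withDensity (ne_of_lt ?_)
  set w := (ball (0 : ℂ) 1).indicator fun z => ENNReal.ofReal (lam ‖z‖) with hw
  have key : ∀ q ∈ Ioi (0 : ℝ) ×ˢ Ioo (-Real.pi) Real.pi,
      ENNReal.ofReal q.1 • w (Complex.polarCoord.symm q)
        = (Ioo (0 : ℝ) 1).indicator (fun r => ENNReal.ofReal (r * lam r)) q.1 := by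
    rintro ⟨r, θ⟩ ⟨hr, -⟩
    have hr' : (0 : ℝ) < r := hr
    have hn : ‖Complex.polarCoord.symm (r, θ)‖ = r := by
      rw [Complex.norm_polarCoord_symm]; exact abs_of_pos hr'
    by_cases h1 : r < 1
    · rw [hw, indicator_of_mem (by rw [mem_ball_zero_iff, hn]; exact h1), indicator_of_mem (by exact ⟨hr', h1⟩), hn,
        ENNReal.ofReal_mul hr'.le, smul_eq_mul]
    · rw [hw, indicator_of_notMem (by rw [mem_ball_zero_iff, hn]; exact h1),
        indicator_of_notMem (fun h => h1 h.2), smul_zero]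
  have hm : AEMeasurable ((Ioo (0 : ℝ) 1).indicator fun r => ENNReal.ofReal (r * lam r)) :=
    (aemeasurable_indicator_iff measurableSet_Ioo).2 hint.aemeasurable.ennreal_ofReal
  rw [← Complex.lintegral_comp_polarCoord_symm, polarCoord_target,
    setLIntegral_congr_fun (measurableSet_Ioi.prod measurableSet_Ioo) key,
    Measure.volume_eq_prod, setLIntegral_prod _ ?_]
  · simp only [lintegral_const]
    rw [lintegral_mul_const'' _ hm.restrict]
    refine ENNReal.mul_lt_top ?_ (by simp)
    refine (setLIntegral_le_lintegral _ _).trans_lt ?_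
    rw [lintegral_indicator measurableSet_Ioo]
    exact (lintegral_mono fun r => Real.ofReal_le_enorm _).trans_lt hint.2
  · rw [← Measure.prod_restrict]
    exact hm.restrict.comp_fst

/-- Rotation invariance of `radialMeasure`. -/
lemma lintegral_radialMeasure_mul {lam : ℝ → ℝ} (hcont : ContinuousOn lam (Ico 0 1))
    {u : ℂ} (hu : ‖u‖ = 1) {h : ℂ → ENNReal} (hh : Measurable h) :
    ∫⁻ z, h (u * z) ∂radialMeasure lam = ∫⁻ z, h z ∂radialMeasure lam := by
  have hd := measurable_density hcont
  rw [radialMeasure, lintegral_withDensity_eq_lintegral_mul _ hd (by fun_prop),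
    lintegral_withDensity_eq_lintegral_mul _ hd hh]
  have hmp := (rotation ⟨u, by simpa [Submonoid.unitSphere] using hu⟩).measurePreserving
  rw [← hmp.lintegral_comp (hd.mul hh)]
  refine lintegral_congr fun z => ?_
  change _ = (ball (0 : ℂ) 1).indicator (fun z => ENNReal.ofReal (lam ‖z‖)) (u * z) * h (u * z)
  simp [indicator, hu]

/-- Jensen's inequality for `x ↦ x ^ p`. -/
lemma lintegral_rpow_le {α : Type*} [MeasurableSpace α] {μ : Measure α} [IsProbabilityMeasure μ]
    {p : ℝ} (hp : 1 < p) {h : α → ℂ} (hh : AEStronglyMeasurable h μ) :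
    (∫⁻ t, ‖h t‖ₑ ∂μ) ^ p ≤ ∫⁻ t, ‖h t‖ₑ ^ p ∂μ := by
  have hp0 : 0 < p := by linarith
  have := eLpNorm_le_eLpNorm_of_exponent_le (p := 1) (q := ENNReal.ofReal p)
    (by simpa using hp.le) hh
  rw [eLpNorm_one_eq_lintegral_enorm,
    eLpNorm_eq_lintegral_rpow_enorm_toReal (by simpa using hp0) (by simp),
    ENNReal.toReal_ofReal hp0.le, one_div] at this
  calc _ ≤ ((∫⁻ t, ‖h t‖ₑ ^ p ∂μ) ^ p⁻¹) ^ p := by gcongr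
    _ = _ := ENNReal.rpow_inv_rpow hp0.ne' _

/-- Harmonic measure of the point `ρ` of the unit disc, in terms of the angle `t ∈ (0, 2π]` on the
unit circle. It is a probability measure for `0 ≤ ρ < 1`. -/
noncomputable def poissonMeasure (ρ : ℝ) : Measure ℝ :=
  (volume.restrict (Ioc 0 (2 * Real.pi))).withDensity fun t =>
    ENNReal.ofReal ((2 * Real.pi)⁻¹ * poissonKernel 0 (ρ : ℂ) (circleMap 0 1 t))

section poisson
variable {ρ : ℝ}

lemma poissonKernel_circle_nonneg (h0 : 0 ≤ ρ) (h1 : ρ < 1) (t : ℝ) :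
    0 ≤ (2 * Real.pi)⁻¹ * poissonKernel 0 (ρ : ℂ) (circleMap 0 1 t) := by
  have : ρ ^ 2 ≤ 1 := by nlinarith
  have h2 : (0 : ℝ) ≤ poissonKernel 0 (ρ : ℂ) (circleMap 0 1 t) := by
    rw [poissonKernel_def]
    refine div_nonneg ?_ (by positivity)
    simpa using this
  positivity

lemma continuous_poissonKernel_circle (h0 : 0 ≤ ρ) (h1 : ρ < 1) :
    Continuous fun t : ℝ => (2 * Real.pi)⁻¹ * poissonKernel 0 (ρ : ℂ) (circleMap 0 1 t) := by
  simp only [poissonKernel_def]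
  refine continuous_const.mul (Continuous.div (by fun_prop) (by fun_prop) fun t => ?_)
  have : circleMap 0 1 t ≠ (ρ : ℂ) := fun h => by
    have := congrArg norm h
    simp [abs_of_nonneg h0] at this
    linarith
  simpa [sub_eq_zero] using this

lemma poisson_formula (h0 : 0 ≤ ρ) (h1 : ρ < 1) {h : ℂ → ℂ} (hh : DiffContOnCl ℂ h (ball 0 1)) :
    h ρ = ∫ t in Ioc 0 (2 * Real.pi), ((2 * Real.pi)⁻¹ *
      poissonKernel 0 (ρ : ℂ) (circleMap 0 1 t)) • h (circleMap 0 1 t) := by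
  rw [← hh.circleAverage_poissonKernel_smul (w := (ρ : ℂ)) (by simpa [abs_of_nonneg h0] using h1),
    Real.circleAverage_def, intervalIntegral.integral_of_le (by positivity), ← integral_smul]
  simp [mul_smul]

lemma isProbabilityMeasure_poissonMeasure (h0 : 0 ≤ ρ) (h1 : ρ < 1) :
    IsProbabilityMeasure (poissonMeasure ρ) := by
  constructor
  have hc := continuous_poissonKernel_circle h0 h1
  have := poisson_formula h0 h1 (h := fun _ => 1) diffContOnCl_const
  rw [poissonMeasure, withDensity_apply _ MeasurableSet.univ, Measure.restrict_univ,
    ← ofReal_integral_eq_lintegral_ofReal _ (ae_of_all _ (poissonKernel_circle_nonneg h0 h1))]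
  · simp only [Complex.real_smul, mul_one] at this
    rw [integral_complex_ofReal] at this
    have h2 := Complex.ofReal_injective (this.symm.trans Complex.ofReal_one.symm)
    rw [h2, ENNReal.ofReal_one]
  · exact (hc.integrableOn_Icc).mono_set Ioc_subset_Icc_self

/-- Subharmonicity of `|h| ^ p`, in the form of the Poisson integral inequality. -/
lemma rpow_enorm_le_poisson (h0 : 0 ≤ ρ) (h1 : ρ < 1) {p : ℝ} (hp : 1 < p) {h : ℂ → ℂ}
    (hh : DiffContOnCl ℂ h (ball 0 1)) :
    ‖h ρ‖ₑ ^ p ≤ ∫⁻ t, ‖h (circleMap 0 1 t)‖ₑ ^ p ∂poissonMeasure ρ := by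
  have := isProbabilityMeasure_poissonMeasure h0 h1
  have hc : Continuous fun t : ℝ => h (circleMap 0 1 t) :=
    hh.continuousOn_ball.comp_continuous (continuous_circleMap 0 1) fun t => by simp
  have hK := continuous_poissonKernel_circle h0 h1
  refine le_trans ?_ (lintegral_rpow_le hp hc.aestronglyMeasurable)
  gcongr
  rw [poisson_formula h0 h1 hh, poissonMeasure,
    lintegral_withDensity_eq_lintegral_mul _
      hK.measurable.ennreal_ofReal hc.measurable.enorm]
  refine (enorm_integral_le_lintegral_enorm _).trans_eq (lintegral_congr fun t => ?_)
  rw [enorm_smul, Pi.mul_apply, Real.enorm_of_nonneg (poissonKernel_circle_nonneg h0 h1 t)]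

end poisson

/-- Dilation `z ↦ ρ z` does not increase the weighted `L^p` norm of a holomorphic function. -/
lemma lintegral_dilate_le {lam : ℝ → ℝ} (hcont : ContinuousOn lam (Ico 0 1))
    (hint : IntegrableOn (fun r : ℝ => r * lam r) (Ioo (0 : ℝ) 1)) {p : ℝ} (hp : 1 < p)
    {f : ℂ → ℂ} (hm : Measurable f) (hf : DifferentiableOn ℂ f (ball 0 1))
    {ρ : ℝ} (h0 : 0 ≤ ρ) (h1 : ρ < 1) :
    ∫⁻ z, ‖f (ρ * z)‖ₑ ^ p ∂radialMeasure lam ≤ ∫⁻ z, ‖f z‖ₑ ^ p ∂radialMeasure lam := by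
  have := isFiniteMeasure_radialMeasure hint
  have := isProbabilityMeasure_poissonMeasure h0 h1
  calc _ ≤ ∫⁻ z, ∫⁻ t, ‖f (circleMap 0 1 t * z)‖ₑ ^ p ∂poissonMeasure ρ ∂radialMeasure lam := by
        refine lintegral_mono_ae ((ae_mem_ball hcont).mono fun z hz => ?_)
        -- The Poisson inequality is applied on the unit circle to the slice `w ↦ f (w z)`.
        refine rpow_enorm_le_poisson h0 h1 hp (h := fun w => f (w * z)) ?_
        refine DifferentiableOn.diffContOnCl (hf.comp (by fun_prop) fun w hw => ?_)
        rw [closure_ball _ one_ne_zero] at hw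
        have hw' : ‖w‖ ≤ 1 := by simpa using hw
        have hz' : ‖z‖ < 1 := by simpa using hz
        simpa using (mul_le_of_le_one_left (norm_nonneg z) hw').trans_lt hz'
    _ = ∫⁻ t, ∫⁻ z, ‖f (circleMap 0 1 t * z)‖ₑ ^ p ∂radialMeasure lam ∂poissonMeasure ρ := by
        refine lintegral_lintegral_swap (Measurable.aemeasurable ?_)
        have : Measurable fun q : ℂ × ℝ => circleMap 0 1 q.2 * q.1 := by fun_prop
        exact (hm.comp this).enorm.pow_const p
    _ = ∫⁻ t, ∫⁻ z, ‖f z‖ₑ ^ p ∂radialMeasure lam ∂poissonMeasure ρ :=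
        lintegral_congr fun t => lintegral_radialMeasure_mul hcont (by simp)
          (h := fun z => ‖f z‖ₑ ^ p) (hm.enorm.pow_const p)
    _ = _ := by simp

/-- Pointwise convergence together with a bound on the norms by the norm of the limit gives strong
`L^p` convergence, here along some index only: if `∫ |f - g n|^p ≥ ε` for all `n`, Fatou's lemma
for `2^(p-1) (|f|^p + |g n|^p) - |f - g n|^p ≥ 0` would give `∫ 2^p |f|^p ≤ ∫ 2^p |f|^p - ε`. -/
lemma exists_lintegral_sub_lt {α : Type*} [MeasurableSpace α] {μ : Measure α} {p : ℝ} (hp : 1 < p)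
    {f : α → ℂ} {g : ℕ → α → ℂ} (hf : Measurable f) (hg : ∀ n, Measurable (g n))
    (hlim : ∀ᵐ z ∂μ, Tendsto (fun n => g n z) atTop (𝓝 (f z)))
    (hle : ∀ n, ∫⁻ z, ‖g n z‖ₑ ^ p ∂μ ≤ ∫⁻ z, ‖f z‖ₑ ^ p ∂μ)
    (hfin : ∫⁻ z, ‖f z‖ₑ ^ p ∂μ ≠ ⊤) {ε : ENNReal} (hε : 0 < ε) :
    ∃ n, ∫⁻ z, ‖f z - g n z‖ₑ ^ p ∂μ < ε := by
  have hp0 : 0 < p := by linarith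
  set I := ∫⁻ z, ‖f z‖ₑ ^ p ∂μ with hI
  set c : ENNReal := 2 ^ (p - 1) with hc
  have hc' : c ≠ ⊤ := ENNReal.rpow_ne_top_of_nonneg (by linarith) (by simp)
  set D : ℕ → α → ENNReal := fun n z => ‖f z - g n z‖ₑ ^ p with hD
  set A : ℕ → α → ENNReal := fun n z => c * (‖f z‖ₑ ^ p + ‖g n z‖ₑ ^ p) with hA
  have hDm : ∀ n, Measurable (D n) := fun n => (hf.sub (hg n)).enorm.pow_const p
  have hAm : ∀ n, Measurable (A n) := fun n =>
    ((hf.enorm.pow_const p).add ((hg n).enorm.pow_const p)).const_mul c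
  have hDA : ∀ n z, D n z ≤ A n z := fun n z =>
    (ENNReal.rpow_le_rpow (enorm_sub_le) hp0.le).trans
      (ENNReal.rpow_add_le_mul_rpow_add_rpow _ _ hp.le)
  have hAI : ∀ n, ∫⁻ z, A n z ∂μ ≤ c * (I + I) := fun n => by
    rw [lintegral_const_mul' _ _ hc', lintegral_add_left (hf.enorm.pow_const p)]
    gcongr
    exact hle n
  have htop : c * (I + I) ≠ ⊤ := ENNReal.mul_ne_top hc' (by simp [hfin])
  have hDI : ∀ n, ∫⁻ z, D n z ∂μ ≤ c * (I + I) := fun n =>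
    (lintegral_mono (hDA n)).trans (hAI n)
  by_contra! hcon
  have hpos : c * (I + I) ≠ 0 := fun h => absurd ((hcon 0).trans (hDI 0)) (by simpa [h] using hε.ne')
  have hpt : ∀ᵐ z ∂μ, liminf (fun n => A n z - D n z) atTop = c * (‖f z‖ₑ ^ p + ‖f z‖ₑ ^ p) := by
    filter_upwards [hlim] with z hz
    refine Tendsto.liminf_eq ?_
    have h1 : Tendsto (fun n => A n z) atTop (𝓝 (c * (‖f z‖ₑ ^ p + ‖f z‖ₑ ^ p))) :=
      ENNReal.Tendsto.const_mul (tendsto_const_nhds.add (hz.enorm.ennrpow_const p)) (Or.inr hc')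
    have h2 : Tendsto (fun n => D n z) atTop (𝓝 0) := by
      have := ((tendsto_const_nhds (x := f z)).sub hz).enorm.ennrpow_const p
      simpa [hp0] using this
    simpa using ENNReal.Tendsto.sub h1 h2 (Or.inr (by simp))
  have hfatou := lintegral_liminf_le (μ := μ) (u := atTop) (fun n => (hAm n).sub (hDm n))
  have hlhs : ∫⁻ z, liminf (fun n => (A n - D n) z) atTop ∂μ = c * (I + I) := by
    refine (lintegral_congr_ae hpt).trans ?_
    rw [lintegral_const_mul' _ _ hc', lintegral_add_left (hf.enorm.pow_const p)]
  have hrhs : liminf (fun n => ∫⁻ z, (A n - D n) z ∂μ) atTop ≤ c * (I + I) - ε := by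
    refine liminf_le_of_frequently_le' (Frequently.of_forall fun n => ?_)
    simp only [Pi.sub_apply]
    rw [lintegral_sub (hDm n) ((hDI n).trans_lt htop.lt_top).ne (ae_of_all _ (hDA n))]
    exact tsub_le_tsub (hAI n) (hcon n)
  rw [hlhs] at hfatou
  exact absurd (hfatou.trans hrhs) (not_le.2 (ENNReal.sub_lt_self htop hpos hε.ne'))

lemma exists_polynomial_near_dilate {f : ℂ → ℂ} (hf : DifferentiableOn ℂ f (ball 0 1))
    {ρ : ℝ} (h0 : 0 < ρ) (h1 : ρ < 1) {δ : ℝ} (hδ : 0 < δ) :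
    ∃ Q : Polynomial ℂ, ∀ z ∈ ball (0 : ℂ) 1, ‖f (ρ * z) - Q.eval z‖ < δ := by
  obtain ⟨R, hρR, hR1⟩ := exists_between h1
  lift R to NNReal using (h0.trans hρR).le
  lift ρ to NNReal using h0.le
  have hR : 0 < R := by exact_mod_cast h0.trans hρR
  have hs := (hf.mono (closedBall_subset_ball hR1)).hasFPowerSeriesOnBall hR
  set q := cauchyPowerSeries f 0 R
  have hu := hs.tendstoUniformlyOn (r' := ρ) (by exact_mod_cast hρR)
  obtain ⟨n, hn⟩ := (Metric.tendstoUniformlyOn_iff.1 hu δ hδ).exists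
  refine ⟨∑ k ∈ Finset.range n, Polynomial.C ((ρ : ℂ) ^ k * q.coeff k) * Polynomial.X ^ k,
    fun z hz => ?_⟩
  have hz' : ‖z‖ < 1 := by simpa using hz
  have := hn (((ρ : ℝ) : ℂ) * z) (by
    simpa using mul_lt_of_lt_one_right h0 hz')
  rw [dist_eq_norm, zero_add] at this
  have heval : Polynomial.eval z (∑ k ∈ Finset.range n,
      Polynomial.C ((ρ : ℂ) ^ k * q.coeff k) * Polynomial.X ^ k)
        = q.partialSum n (((ρ : ℝ) : ℂ) * z) := by
    rw [Polynomial.eval_finsetSum, FormalMultilinearSeries.partialSum]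
    refine Finset.sum_congr rfl fun k _ => ?_
    rw [FormalMultilinearSeries.apply_eq_pow_smul_coeff]
    simp [mul_pow]
    ring
  rwa [heval]

/-- For an integrable radial weight `λ`, `1 < p < ∞`, and a holomorphic `f` in
the weighted `L^p` space, polynomials are dense: for every `ε > 0` there is a complex
polynomial `Q` with `∫_𝔻 |f − Q|^p λ dA < ε`. -/
theorem stmt5 (lam : ℝ → ℝ) (hcont : ContinuousOn lam (Set.Ico 0 1))
    (hpos : ∀ r ∈ Set.Ico (0:ℝ) 1, 0 < lam r)
    (hint : MeasureTheory.IntegrableOn (fun r : ℝ => r * lam r) (Set.Ioo (0:ℝ) 1))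
    (p : ℝ) (hp : 1 < p)
    (f : ℂ → ℂ) (hf : DifferentiableOn ℂ f (Metric.ball 0 1))
    (hfLp : (∫⁻ z in Metric.ball (0:ℂ) 1,
        ENNReal.ofReal (‖f z‖ ^ p * lam ‖z‖)) < ⊤)
    (ε : ℝ) (hε : 0 < ε) :
    ∃ Q : Polynomial ℂ,
      (∫⁻ z in Metric.ball (0:ℂ) 1,
        ENNReal.ofReal (‖f z - Q.eval z‖ ^ p * lam ‖z‖)) < ENNReal.ofReal ε := by
  have hp0 : 0 < p := by linarith
  have hfinite := isFiniteMeasure_radialMeasure hint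
  set ν := radialMeasure lam with hν
  set F := (ball (0 : ℂ) 1).indicator f with hF
  have hFm : Measurable F := measurable_indicator_ball hf
  have hFf : EqOn F f (ball 0 1) := fun z hz => indicator_of_mem hz f
  have hFd : DifferentiableOn ℂ F (ball 0 1) := hf.congr hFf
  rw [lintegral_radialMeasure hcont hp0.le hFm] at hfLp
  set c : ENNReal := 2 ^ (p - 1) with hc
  have hc' : c ≠ ⊤ := ENNReal.rpow_ne_top_of_nonneg (by linarith) (by simp)
  have hη : ∃ η : ENNReal, 0 < η ∧ c * (η + η) ≤ ENNReal.ofReal ε := by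
    have hc0 : c ≠ 0 := by simp [hc]
    refine ⟨ENNReal.ofReal ε / c / 2, by simp [hc', hε], ?_⟩
    rw [ENNReal.add_halves, ENNReal.mul_div_cancel hc0 hc']
  obtain ⟨η, hη0, hη⟩ := hη
  have hρ0 : ∀ n : ℕ, 0 < 1 - 1 / ((n : ℝ) + 2) := fun n => by
    rw [sub_pos, div_lt_one (by positivity)]; linarith [n.cast_nonneg (α := ℝ)]
  have hρ1 : ∀ n : ℕ, 1 - 1 / ((n : ℝ) + 2) < 1 := fun n => by
    have : 0 < 1 / ((n : ℝ) + 2) := by positivity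
    linarith
  have hρlim : Tendsto (fun n : ℕ => 1 - 1 / ((n : ℝ) + 2)) atTop (𝓝 1) := by
    have := (tendsto_const_nhds (x := (1 : ℝ))).sub
      ((tendsto_const_nhds (x := (1 : ℝ))).div_atTop
        (tendsto_atTop_add_const_right atTop (2 : ℝ) (tendsto_natCast_atTop_atTop (R := ℝ))))
    simpa using this
  obtain ⟨n, hn⟩ : ∃ n : ℕ, ∫⁻ z, ‖F z - F (((1 - 1 / ((n : ℝ) + 2) : ℝ) : ℂ) * z)‖ₑ ^ p ∂ν < η := by
    refine exists_lintegral_sub_lt hp hFm (fun n => hFm.comp (by fun_prop)) ?_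
      (fun n => lintegral_dilate_le hcont hint hp hFm hFd (hρ0 n).le (hρ1 n)) hfLp.ne hη0
    filter_upwards [ae_mem_ball hcont] with z hz
    have hcz : ContinuousAt F z := hFd.continuousOn.continuousAt (isOpen_ball.mem_nhds hz)
    refine hcz.tendsto.comp ?_
    simpa using ((Complex.continuous_ofReal.tendsto _).comp hρlim).mul_const z
  set ρ := 1 - 1 / ((n : ℝ) + 2)
  obtain ⟨δ, hδ0, hδ⟩ : ∃ δ : ℝ, 0 < δ ∧ ENNReal.ofReal δ ^ p * ν univ < η := by
    have h1 : Tendsto (fun δ : ℝ => ENNReal.ofReal δ ^ p * ν univ) (𝓝[>] 0) (𝓝 0) := by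
      have h2 : Tendsto (fun δ : ℝ => ENNReal.ofReal δ ^ p) (𝓝[>] 0) (𝓝 0) := by
        have := ((ENNReal.continuous_ofReal.tendsto 0).ennrpow_const p).mono_left
          (nhdsWithin_le_nhds (s := Ioi 0))
        simpa [hp0] using this
      simpa using ENNReal.Tendsto.mul_const h2 (Or.inr (measure_ne_top ν univ))
    obtain ⟨δ, h3, h4⟩ := ((h1.eventually (gt_mem_nhds hη0)).and self_mem_nhdsWithin).exists
    exact ⟨δ, h4, h3⟩
  obtain ⟨Q, hQ⟩ := exists_polynomial_near_dilate hFd (hρ0 n) (hρ1 n) hδ0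
  refine ⟨Q, ?_⟩
  rw [lintegral_radialMeasure hcont hp0.le
    (measurable_indicator_ball (f := fun z => f z - Q.eval z)
      (hf.sub Q.differentiable.differentiableOn))]
  calc _ ≤ ∫⁻ z, c * (‖F z - F (ρ * z)‖ₑ ^ p + ENNReal.ofReal δ ^ p) ∂ν := by
        refine lintegral_mono_ae ?_
        filter_upwards [ae_mem_ball hcont] with z hz
        rw [indicator_of_mem hz, ← hFf hz]
        refine le_trans ?_ (ENNReal.rpow_add_le_mul_rpow_add_rpow _ _ hp.le)
        gcongr
        rw [← sub_add_sub_cancel (F z) (F (ρ * z))]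
        refine (enorm_add_le _ _).trans ?_
        gcongr
        rw [← ofReal_norm]
        exact ENNReal.ofReal_le_ofReal (hQ z hz).le
    _ = c * (∫⁻ z, ‖F z - F (ρ * z)‖ₑ ^ p ∂ν + ENNReal.ofReal δ ^ p * ν univ) := by
        rw [lintegral_const_mul' _ _ hc', lintegral_add_right _ measurable_const, lintegral_const]
    _ < c * (η + η) := by
        have hc0 : c ≠ 0 := by simp [hc]
        exact ENNReal.mul_lt_mul_right hc0 hc' (ENNReal.add_lt_add hn hδ)
    _ ≤ _ := hη
end
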